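/- arXiv:0912.0405 — 4 statements merged into one kernel-verified Lean document; each statement's English description precedes it below -/
import Mathlib

section
/- Let s = (β_1,…,β_n) ∈ B_m^n be a braid system whose Hurwitz orbit s·B_n is finite, and let j be an integer with 2 ≤ j ≤ n. If the partial Coxeter element C = β_1β_2⋯β_j is periodic (some positive power of C is central in B_m), then s·(c_1c_2⋯c_{j-1})^r = s for some integer r with 1 ≤ r ≤ m!. -/
open FreeGroup in
/-- The braid relations on `m` strands (generators indexed 0-based by `Fin (m-1)`). -/
def braidRels (m : ℕ) : Set (FreeGroup (Fin (m - 1))) :=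
  {r | ∃ i j : Fin (m - 1), (i.val + 2 ≤ j.val ∨ j.val + 2 ≤ i.val) ∧
        r = of i * of j * (of j * of i)⁻¹} ∪
  {r | ∃ i j : Fin (m - 1), (i.val + 1 = j.val ∨ j.val + 1 = i.val) ∧
        r = of i * of j * of i * (of j * of i * of j)⁻¹}

/-- The braid group on `m` strands. -/
abbrev BraidGroup (m : ℕ) := PresentedGroup (braidRels m)

/-- The Artin generator `σ_i` (1-based index `1 ≤ i ≤ m-1`); junk value `1` out of range. -/
def braidGen (m : ℕ) (i : ℕ) : BraidGroup m :=
  if h : 1 ≤ i ∧ i ≤ m - 1 then PresentedGroup.of ⟨i - 1, by omega⟩ else 1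

/-- A braid is periodic if some positive power of it is central. -/
def IsPeriodic {m : ℕ} (β : BraidGroup m) : Prop :=
  ∃ k : ℕ, 1 ≤ k ∧ β ^ k ∈ Subgroup.center (BraidGroup m)

/-- The elementary Hurwitz move at (0-based) position `i`, as a bijection on `n`-tuples. -/
def hEquiv {G : Type*} [Group G] {n : ℕ} (i : Fin (n - 1)) : Equiv.Perm (Fin n → G) where
  toFun s := fun k =>
    if k.val = i.val then s ⟨i.val + 1, by have := i.isLt; omega⟩
    else if k.val = i.val + 1 then
      (s ⟨i.val + 1, by have := i.isLt; omega⟩)⁻¹ * s ⟨i.val, by have := i.isLt; omega⟩ *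
        s ⟨i.val + 1, by have := i.isLt; omega⟩
    else s k
  invFun t := fun k =>
    if k.val = i.val then
      t ⟨i.val, by have := i.isLt; omega⟩ * t ⟨i.val + 1, by have := i.isLt; omega⟩ *
        (t ⟨i.val, by have := i.isLt; omega⟩)⁻¹
    else if k.val = i.val + 1 then t ⟨i.val, by have := i.isLt; omega⟩
    else t k
  left_inv s := by
    funext k
    have hlt := i.isLt
    rcases k with ⟨kv, hkv⟩
    by_cases h1 : kv = i.val
    · subst h1
      simp [mul_assoc]
    · by_cases h2 : kv = i.val + 1
      · subst h2
        simp
      · simp [h1, h2]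
  right_inv t := by
    funext k
    have hlt := i.isLt
    rcases k with ⟨kv, hkv⟩
    by_cases h1 : kv = i.val
    · subst h1
      simp [mul_assoc]
    · by_cases h2 : kv = i.val + 1
      · subst h2
        simp [mul_assoc]
      · simp [h1, h2]

/-- The (right) Hurwitz action of a word in the generators `σ_1, …, σ_{n-1}` of `B_n`
on `n`-tuples of elements of a group `G`: `hurwitzAct (w₁ * w₂) s = hurwitzAct w₂ (hurwitzAct w₁ s)`. -/
def hurwitzAct {G : Type*} [Group G] {n : ℕ} (w : FreeGroup (Fin (n - 1))) (s : Fin n → G) :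
    Fin n → G :=
  (MulOpposite.unop (FreeGroup.lift (fun i => MulOpposite.op (hEquiv (G := G) (n := n) i)) w)) s

/-- The Hurwitz orbit of a braid system. -/
def hurwitzOrbit {G : Type*} [Group G] {n : ℕ} (s : Fin n → G) : Set (Fin n → G) :=
  {t | ∃ w : FreeGroup (Fin (n - 1)), hurwitzAct w s = t}

/-- The generator `σ_i` (1-based) as a word acting on length-`n` systems. -/
def genWord (n : ℕ) (i : ℕ) : FreeGroup (Fin (n - 1)) :=
  if h : 1 ≤ i ∧ i ≤ n - 1 then FreeGroup.of ⟨i - 1, by omega⟩ else 1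

/-- The pure braid word `c_i = (σ_1⁻¹ ⋯ σ_{i-1}⁻¹) σ_i² (σ_{i-1} ⋯ σ_1)`. -/
def cWord (n : ℕ) (i : ℕ) : FreeGroup (Fin (n - 1)) :=
  ((List.range (i - 1)).map (fun t => (genWord n (t + 1))⁻¹)).prod *
    genWord n i ^ 2 *
    ((List.range (i - 1)).reverse.map (fun t => genWord n (t + 1))).prod

/-- The word `Δ_{(i,j)} = (σ_i σ_{i+1} ⋯ σ_j)(σ_i ⋯ σ_{j-1}) ⋯ (σ_i σ_{i+1})(σ_i)`. -/
def deltaWord (n i j : ℕ) : FreeGroup (Fin (n - 1)) :=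
  ((List.range (j - i + 1)).map (fun t =>
    ((List.range (j - t - i + 1)).map (fun u => genWord n (i + u))).prod)).prod

/-- The exponent-sum homomorphism, valued in `Multiplicative ℤ`. -/
def expSumHom {m : ℕ} : BraidGroup m →* Multiplicative ℤ :=
  PresentedGroup.toGroup (f := fun _ => Multiplicative.ofAdd 1) (by
    rintro r (⟨i, j, -, rfl⟩ | ⟨i, j, -, rfl⟩) <;>
      simp <;> group)

/-- The exponent sum of a braid: `e(σ_i) = 1`. -/
def esum {m : ℕ} (β : BraidGroup m) : ℤ := Multiplicative.toAdd (expSumHom β)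

/-- A braid system is reducible if some non-trivial partition of the index set has all
entries from the two parts commuting. -/
def IsReducible {G : Type*} [Group G] {n : ℕ} (s : Fin n → G) : Prop :=
  ∃ I : Set (Fin n), I.Nonempty ∧ Iᶜ.Nonempty ∧ ∀ i ∈ I, ∀ j ∈ Iᶜ, Commute (s i) (s j)

/-! ### Filtered operators have unique roots -/
namespace HW

section Filtered

variable {V : Type*} [AddCommGroup V] [Module ℚ V]

theorem filt_step (W : ℕ → Submodule ℚ V) (hanti : ∀ k, W (k + 1) ≤ W k)
    (T U : V →ₗ[ℚ] V)
    (hT : ∀ k, ∀ v ∈ W k, T v - v ∈ W (k + 1)) (hU : ∀ k, ∀ v ∈ W k, U v - v ∈ W (k + 1))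
    (k : ℕ) (ih : ∀ d, ∀ v ∈ W d, T v - U v ∈ W (d + k)) (n : ℕ) :
    ∀ d, ∀ v ∈ W d, (T ^ n) v - (U ^ n) v - (n : ℚ) • (T v - U v) ∈ W (d + k + 1) := by
  have hUn : ∀ n : ℕ, ∀ d, ∀ v ∈ W d, (U ^ n) v - v ∈ W (d + 1) := by
    intro n
    induction n with
    | zero => intro d v hv; simp
    | succ n ihn =>
      intro d v hv
      have h1 := ihn d v hv
      have h2 := hU d v hv
      have h3 := hU (d + 1) _ h1
      have : (U ^ (n + 1)) v - v = (U ((U ^ n) v - v) - ((U ^ n) v - v))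
          + ((U ^ n) v - v) + (U v - v) := by
        rw [pow_succ', Module.End.mul_apply, map_sub]; abel
      rw [this]
      exact add_mem (add_mem (hanti _ h3) h1) h2
  induction n with
  | zero => intro d v hv; simp
  | succ n ihn =>
    intro d v hv
    have h0 := ih d v hv
    have h1 := ihn d v hv
    have h2 : (T ^ n) v - (U ^ n) v ∈ W (d + k) := by
      have := add_mem (hanti _ h1) ((W (d + k)).smul_mem (n : ℚ) h0)
      simpa using this
    have h3 := hT _ _ h2
    have h4 := ih _ _ (hUn n d v hv)
    have h4' : T ((U ^ n) v - v) - U ((U ^ n) v - v) ∈ W (d + k + 1) := by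
      rwa [show d + 1 + k = d + k + 1 by omega] at h4
    have : (T ^ (n + 1)) v - (U ^ (n + 1)) v - ((n + 1 : ℕ) : ℚ) • (T v - U v)
        = ((T ^ n) v - (U ^ n) v - (n : ℚ) • (T v - U v))
          + (T ((T ^ n) v - (U ^ n) v) - ((T ^ n) v - (U ^ n) v))
          + (T ((U ^ n) v - v) - U ((U ^ n) v - v)) := by
      rw [pow_succ', pow_succ', Module.End.mul_apply, Module.End.mul_apply]
      simp only [map_sub]
      push_cast
      rw [add_smul, one_smul]
      abel
    rw [this]
    exact add_mem (add_mem h1 h3) h4'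

theorem filt_unique_root (W : ℕ → Submodule ℚ V) (hanti : ∀ k, W (k + 1) ≤ W k)
    (T U : V →ₗ[ℚ] V)
    (hT : ∀ k, ∀ v ∈ W k, T v - v ∈ W (k + 1)) (hU : ∀ k, ∀ v ∈ W k, U v - v ∈ W (k + 1))
    (N : ℕ) (hN : 1 ≤ N) (h : T ^ N = U ^ N) (k : ℕ) :
    ∀ d, ∀ v ∈ W d, T v - U v ∈ W (d + k) := by
  induction k with
  | zero =>
    intro d v hv
    have := sub_mem (hanti _ (hT d v hv)) (hanti _ (hU d v hv))
    simpa using this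
  | succ k ih =>
    intro d v hv
    have := filt_step W hanti T U hT hU k ih N d v hv
    rw [h, sub_self, zero_sub] at this
    have h2 := neg_mem this
    rw [neg_neg] at h2
    have hN' : (N : ℚ) ≠ 0 := by positivity
    have h3 := (W (d + k + 1)).smul_mem (N : ℚ)⁻¹ h2
    rwa [smul_smul, inv_mul_cancel₀ hN', one_smul] at h3

end Filtered

/-! ### A separated filtration on the group algebra of the free group -/

abbrev FG := FreeGroup ℕ
abbrev QF := MonoidAlgebra ℚ FG

noncomputable def el (f : FG) : QF := MonoidAlgebra.of ℚ FG f

theorem el_mul (f g : FG) : el (f * g) = el f * el g := map_mul _ _ _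
theorem el_one : el 1 = 1 := map_one _
theorem el_mul_inv (f : FG) : el f * el f⁻¹ = 1 := by rw [← el_mul, mul_inv_cancel, el_one]
theorem el_inv_mul (f : FG) : el f⁻¹ * el f = 1 := by rw [← el_mul, inv_mul_cancel, el_one]

noncomputable def aug : QF →ₐ[ℚ] ℚ := MonoidAlgebra.lift ℚ ℚ FG 1

theorem aug_el (f : FG) : aug (el f) = 1 := by simp [aug, el]

noncomputable def augI : Submodule ℚ QF := LinearMap.ker aug.toLinearMap

theorem mem_augI {u : QF} : u ∈ augI ↔ aug u = 0 := Iff.rfl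

theorem augI_mul_left (v : QF) {u : QF} (h : u ∈ augI) : v * u ∈ augI := by
  rw [mem_augI] at *; simp [h]

theorem augI_mul_right (v : QF) {u : QF} (h : u ∈ augI) : u * v ∈ augI := by
  rw [mem_augI] at *; simp [h]

theorem el_sub_one_mem (f : FG) : el f - 1 ∈ augI := by
  rw [mem_augI]; simp [aug_el]

noncomputable def filtW : ℕ → Submodule ℚ QF
  | 0 => ⊤
  | k + 1 => augI * filtW k

theorem filtW_anti (k : ℕ) : filtW (k + 1) ≤ filtW k := by
  induction k with
  | zero => exact le_top
  | succ k ih => exact Submodule.mul_le.2 fun a ha b hb => Submodule.mul_mem_mul ha (ih hb)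

theorem filtW_mul_left (v : QF) (k : ℕ) {u : QF} (h : u ∈ filtW k) : v * u ∈ filtW k := by
  cases k with
  | zero => trivial
  | succ k =>
    refine Submodule.mul_induction_on h ?_ ?_
    · intro a ha b hb
      rw [← mul_assoc]
      exact Submodule.mul_mem_mul (augI_mul_left v ha) hb
    · intro a b ha hb
      rw [mul_add]; exact add_mem ha hb

/-- The algebra endomorphism induced by an endomorphism of the free group. -/
noncomputable def indA (φ : FG →* FG) : QF →ₐ[ℚ] QF :=
  MonoidAlgebra.lift ℚ QF FG ((MonoidAlgebra.of ℚ FG).comp φ)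

theorem indA_el (φ : FG →* FG) (f : FG) : indA φ (el f) = el (φ f) := by
  simp [indA, el]

theorem QF_induction {p : QF → Prop} (h1 : ∀ f, p (el f)) (h2 : ∀ a b, p a → p b → p (a + b))
    (h3 : ∀ (q : ℚ) a, p a → p (q • a)) (u : QF) : p u :=
  MonoidAlgebra.induction_on u h1 h2 h3

theorem aug_indA (φ : FG →* FG) (u : QF) : aug (indA φ u) = aug u := by
  induction u using QF_induction with
  | h1 f => rw [indA_el, aug_el, aug_el]
  | h2 a b ha hb => simp [ha, hb]
  | h3 q a ha => simp [ha]

/-- Endomorphisms sending each generator to a conjugate of itself. -/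
def IsConjEnd (φ : FG →* FG) : Prop :=
  ∀ k, ∃ w : FG, φ (FreeGroup.of k) = w * FreeGroup.of k * w⁻¹

theorem indA_el_sub (φ : FG →* FG) (hφ : IsConjEnd φ) (f : FG) :
    indA φ (el f) - el f ∈ augI * augI := by
  have hl : ∀ (v u : QF), u ∈ augI * augI → v * u ∈ augI * augI := by
    intro v u h
    refine Submodule.mul_induction_on h ?_ ?_
    · intro a ha b hb
      rw [← mul_assoc]
      exact Submodule.mul_mem_mul (augI_mul_left v ha) hb
    · intro a b ha hb
      rw [mul_add]; exact add_mem ha hb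
  have hr : ∀ (v u : QF), u ∈ augI * augI → u * v ∈ augI * augI := by
    intro v u h
    refine Submodule.mul_induction_on h ?_ ?_
    · intro a ha b hb
      rw [mul_assoc]
      exact Submodule.mul_mem_mul ha (augI_mul_right v hb)
    · intro a b ha hb
      rw [add_mul]; exact add_mem ha hb
  rw [indA_el]
  have hinv : ∀ f : FG, el (φ f) - el f ∈ augI * augI → el (φ f⁻¹) - el f⁻¹ ∈ augI * augI := by
    intro f hf
    have : el (φ f⁻¹) - el f⁻¹ = - (el (φ f)⁻¹ * (el (φ f) - el f) * el f⁻¹) := by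
      rw [mul_sub, sub_mul, el_inv_mul, mul_assoc, el_mul_inv, map_inv]
      simp
    rw [this]
    exact neg_mem (hr _ _ (hl _ _ hf))
  have hof : ∀ k, el (φ (FreeGroup.of k)) - el (FreeGroup.of k) ∈ augI * augI := by
    intro k
    obtain ⟨w, hw⟩ := hφ k
    set x := FreeGroup.of k
    have : el (φ x) - el x
        = ((el w - 1) * (el x - 1) - (el x - 1) * (el w - 1)) * el w⁻¹ := by
      rw [hw, el_mul, el_mul]
      have h1 : el x = el x * el w * el w⁻¹ := by rw [mul_assoc, el_mul_inv, mul_one]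
      calc _ = el w * el x * el w⁻¹ - el x * el w * el w⁻¹ := by rw [← h1]
        _ = _ := by noncomm_ring
    rw [this]
    exact hr _ _ (sub_mem (Submodule.mul_mem_mul (el_sub_one_mem _) (el_sub_one_mem _))
      (Submodule.mul_mem_mul (el_sub_one_mem _) (el_sub_one_mem _)))
  induction f using FreeGroup.induction_on with
  | C1 => simp
  | of k => exact hof k
  | inv_of k hk => exact hinv _ (hof k)
  | mul f g hf hg =>
    have : el (φ (f * g)) - el (f * g)
        = el (φ f) * (el (φ g) - el g) + (el (φ f) - el f) * el g := by
      rw [map_mul, el_mul, el_mul]; noncomm_ring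
    rw [this]
    exact add_mem (hl _ _ hg) (hr _ _ hf)

theorem indA_sub (φ : FG →* FG) (hφ : IsConjEnd φ) (u : QF) :
    indA φ u - u ∈ augI * augI := by
  induction u using QF_induction with
  | h1 f => exact indA_el_sub φ hφ f
  | h2 a b ha hb =>
    have := add_mem ha hb
    rw [map_add]; convert this using 1; abel
  | h3 q a ha =>
    rw [map_smul, ← smul_sub]; exact Submodule.smul_mem _ _ ha

theorem augI_mul_filtW {a b : QF} {k : ℕ} (ha : a ∈ augI) (hb : b ∈ filtW k) :
    a * b ∈ filtW (k + 1) := Submodule.mul_mem_mul ha hb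

theorem indA_filt (φ : FG →* FG) (hφ : IsConjEnd φ) (k : ℕ) :
    ∀ u ∈ filtW k, indA φ u - u ∈ filtW (k + 1) := by
  induction k with
  | zero =>
    intro u _
    have : indA φ u - u ∈ augI := by rw [mem_augI, map_sub, aug_indA, sub_self]
    simpa using augI_mul_filtW (k := 0) this (b := 1) trivial
  | succ k ih =>
    intro u hu
    refine Submodule.mul_induction_on hu ?_ ?_
    · intro a ha b hb
      have h1 : indA φ (a * b) - a * b
          = indA φ a * (indA φ b - b) + (indA φ a - a) * b := by
        rw [map_mul]; noncomm_ring
      rw [h1]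
      refine add_mem (augI_mul_filtW ?_ (ih b hb)) ?_
      · rw [mem_augI, aug_indA]; exact ha
      · have := Submodule.mul_mem_mul (indA_sub φ hφ a) hb
        rwa [mul_assoc] at this
    · intro a b ha hb
      have := add_mem ha hb
      rw [map_add]; convert this using 1; abel

/-- The operator `u ↦ f · φ(u)`. -/
noncomputable def opT (f : FG) (φ : FG →* FG) : QF →ₗ[ℚ] QF :=
  (LinearMap.mulLeft ℚ (el f)).comp (indA φ).toLinearMap

theorem opT_apply (f : FG) (φ : FG →* FG) (u : QF) : opT f φ u = el f * indA φ u := rfl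

theorem opT_filt (f : FG) (φ : FG →* FG) (hφ : IsConjEnd φ) (k : ℕ) :
    ∀ u ∈ filtW k, opT f φ u - u ∈ filtW (k + 1) := by
  intro u hu
  have : opT f φ u - u = el f * (indA φ u - u) + (el f - 1) * u := by
    rw [opT_apply]; noncomm_ring
  rw [this]
  exact add_mem (filtW_mul_left _ _ (indA_filt φ hφ k u hu))
    (augI_mul_filtW (el_sub_one_mem f) hu)

theorem opT_mul (f g : FG) (φ ψ : FG →* FG) :
    opT f φ * opT g ψ = opT (f * φ g) (φ.comp ψ) := by
  refine LinearMap.ext fun u => ?_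
  rw [Module.End.mul_apply, opT_apply, opT_apply, opT_apply, map_mul, indA_el, el_mul, mul_assoc]
  congr 2
  induction u using QF_induction with
  | h1 f => simp [indA_el]
  | h2 a b ha hb => simp [ha, hb]
  | h3 q a ha => simp [ha]

/-! ### Separatedness by a ping-pong argument -/

open Polynomial

abbrev PP := ℚ[X] × ℚ[X]

noncomputable def shear (i : ℕ) (e : ℤ) : PP →ₗ[ℚ] PP where
  toFun u := (u.1 + C (e : ℚ) * X * (u.2 - C (i : ℚ) * u.1),
    u.2 + C (i : ℚ) * (C (e : ℚ) * X * (u.2 - C (i : ℚ) * u.1)))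
  map_add' u v := by ext1 <;> simp <;> ring
  map_smul' q u := by
    ext1 <;> simp [smul_eq_C_mul] <;> ring

theorem shear_apply (i : ℕ) (e : ℤ) (u : PP) :
    shear i e u = (u.1 + C (e : ℚ) * X * (u.2 - C (i : ℚ) * u.1),
    u.2 + C (i : ℚ) * (C (e : ℚ) * X * (u.2 - C (i : ℚ) * u.1))) := rfl

theorem shear_mul (i : ℕ) (a b : ℤ) : shear i a * shear i b = shear i (a + b) := by
  refine LinearMap.ext fun u => ?_
  rw [Module.End.mul_apply, shear_apply, shear_apply, shear_apply]
  ext1 <;> simp <;> ring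

theorem shear_zero (i : ℕ) : shear i 0 = 1 := by
  refine LinearMap.ext fun u => ?_
  rw [shear_apply]; simp

noncomputable def shearU (i : ℕ) : (PP →ₗ[ℚ] PP)ˣ where
  val := shear i 1
  inv := shear i (-1)
  val_inv := by rw [shear_mul, ← shear_zero i]; rfl
  inv_val := by rw [shear_mul, ← shear_zero i]; rfl

theorem shearU_zpow (i : ℕ) (e : ℤ) : ((shearU i ^ e : (PP →ₗ[ℚ] PP)ˣ) : PP →ₗ[ℚ] PP) = shear i e := by
  induction e with
  | zero => simp [shear_zero]
  | succ n ih => rw [zpow_add_one, Units.val_mul, ih]; exact shear_mul _ _ _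
  | pred n ih => rw [zpow_sub_one, Units.val_mul, ih]; exact shear_mul _ _ _

noncomputable def rhoU : FG →* (PP →ₗ[ℚ] PP)ˣ := FreeGroup.lift shearU

def ppSet (i : ℕ) : Set PP := {u | u.1 ≠ 0 ∧ (u.2 - C (i : ℚ) * u.1).degree < u.1.degree}

theorem ppSet_degree {i j : ℕ} (hij : i ≠ j) {u : PP} (hu : u ∈ ppSet j) :
    (u.2 - C (i : ℚ) * u.1).degree = u.1.degree := by
  have h : u.2 - C (i : ℚ) * u.1 = C ((j : ℚ) - i) * u.1 + (u.2 - C (j : ℚ) * u.1) := by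
    simp only [C_sub]; ring
  have hne : ((j : ℚ) - i) ≠ 0 := by
    rw [sub_ne_zero]; exact_mod_cast hij.symm
  have h2 : (C ((j : ℚ) - i) * u.1).degree = u.1.degree := by
    rw [degree_mul, degree_C hne, zero_add]
  rw [h, degree_add_eq_left_of_degree_lt, h2]
  rw [h2]; exact hu.2

theorem shear_ppSet {i j : ℕ} (hij : i ≠ j) {e : ℤ} (he : e ≠ 0) {u : PP} (hu : u ∈ ppSet j) :
    shear i e u ∈ ppSet i := by
  have hd := ppSet_degree hij hu
  have hne : (e : ℚ) ≠ 0 := by exact_mod_cast he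
  have h1 : (C (e : ℚ) * X * (u.2 - C (i : ℚ) * u.1)).degree = 1 + u.1.degree := by
    rw [degree_mul, degree_mul, degree_C hne, degree_X, hd, zero_add]
  have hlt : u.1.degree < 1 + u.1.degree := by
    rw [degree_eq_natDegree hu.1]
    norm_cast; omega
  have h2 : (u.1 + C (e : ℚ) * X * (u.2 - C (i : ℚ) * u.1)).degree = 1 + u.1.degree := by
    rw [degree_add_eq_right_of_degree_lt, h1]
    rw [h1]; exact hlt
  constructor
  · intro h0
    rw [shear_apply] at h0
    dsimp only at h0
    rw [h0, degree_zero] at h2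
    rw [← h2] at hlt
    exact not_lt_bot hlt
  · rw [shear_apply]
    dsimp only
    rw [h2]
    have : u.2 + C (i : ℚ) * (C (e : ℚ) * X * (u.2 - C (i : ℚ) * u.1))
        - C (i : ℚ) * (u.1 + C (e : ℚ) * X * (u.2 - C (i : ℚ) * u.1))
        = u.2 - C (i : ℚ) * u.1 := by ring
    rw [this, hd]
    exact hlt

open Monoid Pointwise in
theorem rhoU_injective : Function.Injective rhoU := by
  have : rhoU = (CoprodI.lift fun i => FreeGroup.lift fun _ => shearU i).comp
        (@freeGroupEquivCoprodI ℕ).toMonoidHom := by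
    refine FreeGroup.ext_hom _ _ fun i => ?_
    simp [rhoU]
  rw [this, MonoidHom.coe_comp]
  clear this
  refine Function.Injective.comp ?_ (MulEquiv.injective freeGroupEquivCoprodI)
  let H : ℕ → Type := fun _i => FreeGroup Unit
  let f : ∀ i, H i →* (PP →ₗ[ℚ] PP)ˣ := fun i => FreeGroup.lift fun _ => shearU i
  change Function.Injective (CoprodI.lift f)
  apply CoprodI.lift_injective_of_ping_pong f _ ppSet
  · intro i
    refine ⟨(1, C (i : ℚ)), one_ne_zero, ?_⟩
    simp
  · intro i j hij
    rw [Function.onFun, Set.disjoint_left]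
    intro u hi hj
    have := ppSet_degree hij hj
    exact absurd hi.2 (by rw [this]; exact lt_irrefl _)
  · intro i j hij
    refine FreeGroup.freeGroupUnitEquivInt.forall_congr_left.mpr ?_
    intro n hne1
    change FreeGroup.lift (fun _ => shearU i) (FreeGroup.of () ^ n) • ppSet j ⊆ ppSet i
    simp only [map_zpow, FreeGroup.lift_apply_of]
    have hnne0 : n ≠ 0 := by
      rintro rfl
      apply hne1
      simp [H, FreeGroup.freeGroupUnitEquivInt]
    rintro _ ⟨u, hu, rfl⟩
    change ((shearU i ^ n : (PP →ₗ[ℚ] PP)ˣ) : PP →ₗ[ℚ] PP) u ∈ ppSet i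
    rw [shearU_zpow]
    exact shear_ppSet hij hnne0 hu
  · right
    refine ⟨0, ?_⟩
    change 3 ≤ Cardinal.mk (FreeGroup Unit)
    rw [FreeGroup.freeGroupUnitEquivInt.cardinal_eq, Cardinal.mk_denumerable]
    exact (Cardinal.natCast_lt_aleph0 (n := 3)).le

noncomputable def rhoA : QF →ₐ[ℚ] (PP →ₗ[ℚ] PP) :=
  MonoidAlgebra.lift ℚ (PP →ₗ[ℚ] PP) FG ((Units.coeHom _).comp rhoU)

theorem rhoA_el (f : FG) : rhoA (el f) = (rhoU f : PP →ₗ[ℚ] PP) := by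
  simp [rhoA, el]

def DvdP (k : ℕ) (u : PP) : Prop := (X : ℚ[X]) ^ k ∣ u.1 ∧ (X : ℚ[X]) ^ k ∣ u.2

theorem DvdP.add {k : ℕ} {u v : PP} (hu : DvdP k u) (hv : DvdP k v) : DvdP k (u + v) :=
  ⟨dvd_add hu.1 hv.1, dvd_add hu.2 hv.2⟩

theorem DvdP.smul {k : ℕ} {u : PP} (q : ℚ) (hu : DvdP k u) : DvdP k (q • u) :=
  ⟨by rw [Prod.smul_fst, smul_eq_C_mul]; exact hu.1.mul_left _,
   by rw [Prod.smul_snd, smul_eq_C_mul]; exact hu.2.mul_left _⟩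

theorem DvdP.mono {k : ℕ} {u : PP} (hu : DvdP (k + 1) u) : DvdP k u :=
  ⟨(pow_dvd_pow _ (Nat.le_succ k)).trans hu.1, (pow_dvd_pow _ (Nat.le_succ k)).trans hu.2⟩

theorem DvdP.neg {k : ℕ} {u : PP} (hu : DvdP k u) : DvdP k (-u) :=
  ⟨(dvd_neg).2 hu.1, (dvd_neg).2 hu.2⟩

theorem shear_dvd (i : ℕ) (e : ℤ) (k : ℕ) (u : PP) (hu : DvdP k u) :
    DvdP (k + 1) (shear i e u - u) := by
  obtain ⟨⟨a, ha⟩, ⟨b, hb⟩⟩ := hu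
  refine ⟨⟨C (e : ℚ) * (b - C (i : ℚ) * a), ?_⟩, ⟨C (i : ℚ) * C (e : ℚ) * (b - C (i : ℚ) * a), ?_⟩⟩
  · rw [shear_apply]; simp [ha, hb]; ring
  · rw [shear_apply]; simp [ha, hb]; ring

theorem rhoU_dvd (f : FG) (k : ℕ) (u : PP) (hu : DvdP k u) :
    DvdP (k + 1) ((rhoU f : PP →ₗ[ℚ] PP) u - u) := by
  induction f using FreeGroup.induction_on generalizing u with
  | C1 => simp [DvdP]
  | of i =>
    have : (rhoU (FreeGroup.of i) : PP →ₗ[ℚ] PP) = shear i 1 := by simp [rhoU, shearU]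
    rw [this]; exact shear_dvd i 1 k u hu
  | inv_of i _ =>
    have : (rhoU (FreeGroup.of i)⁻¹ : PP →ₗ[ℚ] PP) = shear i (-1) := by
      rw [map_inv]; simp [rhoU, shearU]
    rw [this]; exact shear_dvd i (-1) k u hu
  | mul f g hf hg =>
    have h1 := hg u hu
    have h2 : DvdP k ((rhoU g : PP →ₗ[ℚ] PP) u) := by simpa using h1.mono.add hu
    have h3 := (hf _ h2).add h1
    rw [map_mul, Units.val_mul, Module.End.mul_apply]
    simpa using h3

theorem rhoA_aug (x : QF) (k : ℕ) (u : PP) (hu : DvdP k u) :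
    DvdP (k + 1) (rhoA x u - aug x • u) := by
  induction x using QF_induction with
  | h1 f => rw [rhoA_el, aug_el, one_smul]; exact rhoU_dvd f k u hu
  | h2 a b ha hb =>
    have := ha.add hb
    rw [map_add, map_add, add_smul, LinearMap.add_apply]
    convert this using 1; abel
  | h3 q a ha =>
    have := ha.smul q
    rw [map_smul, map_smul, LinearMap.smul_apply]
    convert this using 1
    rw [smul_sub, smul_smul, smul_eq_mul]

theorem rhoA_filt (k : ℕ) : ∀ x ∈ filtW k, ∀ u, DvdP k (rhoA x u) := by
  induction k with
  | zero => intro x _ u; simp [DvdP]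
  | succ k ih =>
    intro x hx u
    refine Submodule.mul_induction_on hx ?_ ?_
    · intro a ha b hb
      have h1 := rhoA_aug a k _ (ih b hb u)
      rw [mem_augI.1 ha, zero_smul, sub_zero] at h1
      rwa [map_mul, Module.End.mul_apply]
    · intro a b ha hb
      rw [map_add, LinearMap.add_apply]; exact ha.add hb

theorem eq_zero_of_dvd (p : ℚ[X]) (h : ∀ k : ℕ, X ^ k ∣ p) : p = 0 := by
  ext n
  have := (X_pow_dvd_iff.1 (h (n + 1))) n (Nat.lt_succ_self n)
  simpa using this

theorem filt_separated (f g : FG) (h : ∀ k, el f - el g ∈ filtW k) : f = g := by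
  apply rhoU_injective
  apply Units.ext
  rw [← rhoA_el, ← rhoA_el, ← sub_eq_zero, ← map_sub]
  refine LinearMap.ext fun u => ?_
  have := fun k => rhoA_filt k _ (h k) u
  exact Prod.ext (eq_zero_of_dvd _ fun k => (this k).1) (eq_zero_of_dvd _ fun k => (this k).2)

theorem opT_unique_root (f g : FG) (φ : FG →* FG) (hφ : IsConjEnd φ) (N : ℕ) (hN : 1 ≤ N)
    (h : opT f φ ^ N = opT g φ ^ N) : f = g := by
  apply filt_separated
  intro k
  have := filt_unique_root filtW filtW_anti _ _ (opT_filt f φ hφ) (opT_filt g φ hφ) N hN h k 0 1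
    trivial
  simpa [opT_apply] using this

end HW
/-! ### Braid groups: generators, lifting, induction -/
namespace HW

/-- The 0-based generator, with value `1` out of range. -/
def bg (m i : ℕ) : BraidGroup m := if h : i < m - 1 then PresentedGroup.of ⟨i, h⟩ else 1

theorem bg_of_ge {m i : ℕ} (h : m - 1 ≤ i) : bg m i = 1 := by
  rw [bg, dif_neg (by omega)]

theorem bg_far (m : ℕ) {i j : ℕ} (h : i + 2 ≤ j) : Commute (bg m i) (bg m j) := by
  unfold bg
  split_ifs with h1 h2
  · have : (PresentedGroup.mk (braidRels m) (FreeGroup.of (⟨i, h1⟩ : Fin (m - 1)) *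
        FreeGroup.of ⟨j, h2⟩ * (FreeGroup.of ⟨j, h2⟩ * FreeGroup.of ⟨i, h1⟩)⁻¹)) = 1 :=
      PresentedGroup.one_of_mem (Or.inl ⟨⟨i, h1⟩, ⟨j, h2⟩, Or.inl h, rfl⟩)
    rw [map_mul, map_inv, mul_inv_eq_one] at this
    exact this
  all_goals simp

theorem bg_braid {m i : ℕ} (h : i + 1 < m - 1) :
    bg m i * bg m (i + 1) * bg m i = bg m (i + 1) * bg m i * bg m (i + 1) := by
  have h1 : i < m - 1 := by omega
  unfold bg
  rw [dif_pos h, dif_pos h1]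
  have : (PresentedGroup.mk (braidRels m) (FreeGroup.of (⟨i, h1⟩ : Fin (m - 1)) *
      FreeGroup.of ⟨i + 1, h⟩ * FreeGroup.of ⟨i, h1⟩ *
      (FreeGroup.of ⟨i + 1, h⟩ * FreeGroup.of ⟨i, h1⟩ * FreeGroup.of ⟨i + 1, h⟩)⁻¹)) = 1 :=
    PresentedGroup.one_of_mem (Or.inr ⟨⟨i, h1⟩, ⟨i + 1, h⟩, Or.inl rfl, rfl⟩)
  rw [map_mul, map_inv, mul_inv_eq_one] at this
  exact this

theorem bLift_exists {G : Type*} [Group G] (m : ℕ) (f : ℕ → G)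
    (hfar : ∀ i j, i + 2 ≤ j → j < m - 1 → f i * f j = f j * f i)
    (hbr : ∀ i, i + 1 < m - 1 → f i * f (i + 1) * f i = f (i + 1) * f i * f (i + 1)) :
    ∃ F : BraidGroup m →* G, ∀ i, i < m - 1 → F (bg m i) = f i := by
  refine ⟨PresentedGroup.toGroup (f := fun i : Fin (m - 1) => f i.val) ?_, ?_⟩
  · rintro r (⟨i, j, h, rfl⟩ | ⟨i, j, h, rfl⟩)
    · simp only [map_mul, map_inv, FreeGroup.lift_apply_of]
      rw [mul_inv_eq_one]
      rcases h with h | h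
      · exact hfar _ _ h j.isLt
      · exact (hfar _ _ h i.isLt).symm
    · simp only [map_mul, map_inv, FreeGroup.lift_apply_of]
      rw [mul_inv_eq_one]
      rcases h with h | h
      · have := hbr i.val (by rw [h]; exact j.isLt)
        rwa [h] at this
      · have := hbr j.val (by rw [h]; exact i.isLt)
        rw [h] at this
        exact this.symm
  · intro i hi
    rw [bg, dif_pos hi, PresentedGroup.toGroup.of]

theorem bInd {m : ℕ} {p : BraidGroup m → Prop} (one : p 1) (gen : ∀ i, i < m - 1 → p (bg m i))
    (mul : ∀ a b, p a → p b → p (a * b)) (inv : ∀ a, p a → p a⁻¹) (x : BraidGroup m) : p x := by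
  have hx : x ∈ Subgroup.closure (Set.range (PresentedGroup.of : _ → BraidGroup m)) := by
    rw [PresentedGroup.closure_range_of]; trivial
  induction hx using Subgroup.closure_induction with
  | mem y hy =>
    obtain ⟨i, rfl⟩ := hy
    have := gen i.val i.isLt
    rwa [bg, dif_pos i.isLt] at this
  | one => exact one
  | mul a b _ _ ha hb => exact mul a b ha hb
  | inv a _ ha => exact inv a ha

/-! ### The underlying permutation -/

theorem perm_apply_inv {α : Type*} (p : Equiv.Perm α) (x : α) : p (p⁻¹ x) = x :=
  p.apply_symm_apply x

theorem swap_lt {i k : ℕ} (h : k < i) : Equiv.swap i (i + 1) k = k :=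
  Equiv.swap_apply_of_ne_of_ne (by omega) (by omega)
theorem swap_gt {i k : ℕ} (h : i + 1 < k) : Equiv.swap i (i + 1) k = k :=
  Equiv.swap_apply_of_ne_of_ne (by omega) (by omega)

theorem permHom_exists (m : ℕ) : ∃ F : BraidGroup m →* Equiv.Perm ℕ,
    ∀ i, i < m - 1 → F (bg m i) = Equiv.swap i (i + 1) := by
  apply bLift_exists
  · intro i j h _
    ext k
    simp only [Equiv.Perm.mul_apply, Equiv.swap_apply_def]
    split_ifs <;> omega
  · intro i _
    ext k
    simp only [Equiv.Perm.mul_apply, Equiv.swap_apply_def]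
    split_ifs <;> omega

noncomputable def permHom (m : ℕ) : BraidGroup m →* Equiv.Perm ℕ := (permHom_exists m).choose
theorem permHom_bg {m i : ℕ} (h : i < m - 1) : permHom m (bg m i) = Equiv.swap i (i + 1) :=
  (permHom_exists m).choose_spec i h

theorem permHom_fix {m : ℕ} (x : BraidGroup m) : ∀ k, m ≤ k → permHom m x k = k := by
  induction x using bInd with
  | one => simp
  | gen i hi => intro k hk; rw [permHom_bg hi, swap_gt (by omega)]
  | mul a b ha hb => intro k hk; rw [map_mul, Equiv.Perm.mul_apply, hb k hk, ha k hk]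
  | inv a ha => intro k hk; rw [map_inv, Equiv.Perm.inv_eq_iff_eq, ha k hk]

theorem permHom_pow_factorial {m : ℕ} (x : BraidGroup m) :
    permHom m (x ^ m.factorial) = 1 := by
  set p := permHom m x with hp
  have hne : ∀ k, p k ≠ k → k < m := by
    intro k hk
    by_contra h
    exact hk (permHom_fix x k (by omega))
  have hs : ∀ k, p k < m ↔ k < m := by
    intro k
    by_cases hk : p k = k
    · rw [hk]
    · have h1 := hne k hk
      have h2 : p k < m := hne (p k) (fun h => hk (p.injective h))
      tauto
  have h1 : Equiv.Perm.ofSubtype (p.subtypePerm (p := fun k => k < m) hs) = p :=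
    Equiv.Perm.ofSubtype_subtypePerm hs hne
  have h2 : (p.subtypePerm (p := fun k => k < m) hs) ^ m.factorial = 1 := by
    haveI : Fintype {k // k < m} := Fintype.ofEquiv _ (Fin.equivSubtype (n := m))
    have : Fintype.card (Equiv.Perm {k // k < m}) = m.factorial := by
      rw [Fintype.card_perm]; congr 1
      rw [Fintype.card_congr (Fin.equivSubtype (n := m)).symm, Fintype.card_fin]
    rw [← this]
    exact pow_card_eq_one
  rw [map_pow, ← hp, ← h1, ← map_pow, h2, map_one]

/-! ### The Artin action -/

noncomputable def artinFwd (i : ℕ) : FG →* FG := FreeGroup.lift fun k =>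
  if k = i then (FreeGroup.of i)⁻¹ * FreeGroup.of (i + 1) * FreeGroup.of i
  else if k = i + 1 then FreeGroup.of i else FreeGroup.of k

noncomputable def artinBwd (i : ℕ) : FG →* FG := FreeGroup.lift fun k =>
  if k = i then FreeGroup.of (i + 1)
  else if k = i + 1 then FreeGroup.of (i + 1) * FreeGroup.of i * (FreeGroup.of (i + 1))⁻¹
  else FreeGroup.of k

theorem artinFwd_eq (i : ℕ) : artinFwd i (FreeGroup.of i)
    = (FreeGroup.of i)⁻¹ * FreeGroup.of (i + 1) * FreeGroup.of i := by simp [artinFwd]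
theorem artinFwd_succ (i : ℕ) : artinFwd i (FreeGroup.of (i + 1)) = FreeGroup.of i := by
  simp [artinFwd]
theorem artinFwd_ne {i k : ℕ} (h1 : k ≠ i) (h2 : k ≠ i + 1) :
    artinFwd i (FreeGroup.of k) = FreeGroup.of k := by simp [artinFwd, h1, h2]
theorem artinBwd_eq (i : ℕ) : artinBwd i (FreeGroup.of i) = FreeGroup.of (i + 1) := by
  simp [artinBwd]
theorem artinBwd_succ (i : ℕ) : artinBwd i (FreeGroup.of (i + 1))
    = FreeGroup.of (i + 1) * FreeGroup.of i * (FreeGroup.of (i + 1))⁻¹ := by simp [artinBwd]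
theorem artinBwd_ne {i k : ℕ} (h1 : k ≠ i) (h2 : k ≠ i + 1) :
    artinBwd i (FreeGroup.of k) = FreeGroup.of k := by simp [artinBwd, h1, h2]

noncomputable def artin (i : ℕ) : MulAut FG :=
  MonoidHom.toMulEquiv (artinFwd i) (artinBwd i)
    (by
      refine FreeGroup.ext_hom _ _ fun k => ?_
      by_cases h1 : k = i
      · subst h1
        simp only [MonoidHom.comp_apply, artinFwd_eq, map_mul, map_inv, artinBwd_eq, artinBwd_succ,
          MonoidHom.id_apply]
        group
      by_cases h2 : k = i + 1
      · subst h2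
        simp only [MonoidHom.comp_apply, artinFwd_succ, artinBwd_eq, MonoidHom.id_apply]
      simp only [MonoidHom.comp_apply, artinFwd_ne h1 h2, artinBwd_ne h1 h2, MonoidHom.id_apply])
    (by
      refine FreeGroup.ext_hom _ _ fun k => ?_
      by_cases h1 : k = i
      · subst h1
        simp only [MonoidHom.comp_apply, artinFwd_succ, artinBwd_eq, MonoidHom.id_apply]
      by_cases h2 : k = i + 1
      · subst h2
        simp only [MonoidHom.comp_apply, artinFwd_eq, map_mul, map_inv, artinFwd_succ, artinBwd_succ,
          MonoidHom.id_apply]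
        group
      simp only [MonoidHom.comp_apply, artinFwd_ne h1 h2, artinBwd_ne h1 h2, MonoidHom.id_apply])

theorem artin_apply (i : ℕ) (x : FG) : artin i x = artinFwd i x := rfl

theorem mulAut_ext {a b : MulAut FG} (h : ∀ k, a (FreeGroup.of k) = b (FreeGroup.of k)) :
    a = b := by
  have : a.toMonoidHom = b.toMonoidHom := FreeGroup.ext_hom _ _ h
  ext x
  exact DFunLike.congr_fun this x

theorem artinHom_exists (m : ℕ) : ∃ F : BraidGroup m →* MulAut FG,
    ∀ i, i < m - 1 → F (bg m i) = artin i := by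
  apply bLift_exists
  · intro i j h _
    apply mulAut_ext
    intro k
    simp only [MulAut.mul_apply, artin_apply]
    by_cases h1 : k = i
    · subst h1
      simp only [artinFwd_eq, map_mul, map_inv, artinFwd_ne (i := j) (k := k) (by omega) (by omega),
        artinFwd_ne (i := j) (k := k + 1) (by omega) (by omega)]
    by_cases h2 : k = i + 1
    · subst h2
      simp only [artinFwd_succ, artinFwd_ne (i := j) (k := i) (by omega) (by omega),
        artinFwd_ne (i := j) (k := i + 1) (by omega) (by omega)]
    rw [artinFwd_ne h1 h2]
    by_cases h3 : k = j
    · subst h3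
      simp only [artinFwd_eq, map_mul, map_inv, artinFwd_ne (i := i) (k := k) (by omega) (by omega),
        artinFwd_ne (i := i) (k := k + 1) (by omega) (by omega)]
    by_cases h4 : k = j + 1
    · subst h4
      simp only [artinFwd_succ, artinFwd_ne (i := i) (k := j) (by omega) (by omega)]
    rw [artinFwd_ne h3 h4, artinFwd_ne h1 h2]
  · intro i _
    apply mulAut_ext
    intro k
    simp only [MulAut.mul_apply, artin_apply]
    have a1 := artinFwd_eq i
    have a2 := artinFwd_succ i
    have a3 := artinFwd_ne (i := i) (k := i + 2) (by omega) (by omega)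
    have b1 := artinFwd_ne (i := i + 1) (k := i) (by omega) (by omega)
    have b2 := artinFwd_eq (i + 1)
    have b3 := artinFwd_succ (i + 1)
    rw [show i + 1 + 1 = i + 2 from rfl] at b2 b3
    by_cases h1 : k = i
    · subst h1
      simp only [a1, a2, a3, b1, b2, b3, map_mul, map_inv]
      group
    by_cases h2 : k = i + 1
    · subst h2
      simp only [a1, a2, a3, b1, b2, b3, map_mul, map_inv]
    by_cases h3 : k = i + 2
    · subst h3
      simp only [a1, a2, a3, b1, b2, b3, map_mul, map_inv]
    have h3' : k ≠ i + 1 + 1 := h3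
    simp only [artinFwd_ne h1 h2, artinFwd_ne h2 h3']

noncomputable def artinHom (m : ℕ) : BraidGroup m →* MulAut FG := (artinHom_exists m).choose
theorem artinHom_bg {m i : ℕ} (h : i < m - 1) : artinHom m (bg m i) = artin i :=
  (artinHom_exists m).choose_spec i h

theorem artinHom_conj {m : ℕ} (b : BraidGroup m) : ∀ k, ∃ w : FG,
    artinHom m b (FreeGroup.of k) = w * FreeGroup.of (permHom m b k) * w⁻¹ := by
  induction b using bInd with
  | one => intro k; exact ⟨1, by simp⟩
  | gen i hi =>
    intro k
    rw [artinHom_bg hi, permHom_bg hi, artin_apply]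
    by_cases h1 : k = i
    · subst h1
      exact ⟨(FreeGroup.of k)⁻¹, by rw [artinFwd_eq, Equiv.swap_apply_left, inv_inv]⟩
    by_cases h2 : k = i + 1
    · subst h2
      exact ⟨1, by rw [artinFwd_succ, Equiv.swap_apply_right]; simp⟩
    exact ⟨1, by rw [artinFwd_ne h1 h2, Equiv.swap_apply_of_ne_of_ne h1 h2]; simp⟩
  | mul a b ha hb =>
    intro k
    obtain ⟨w, hw⟩ := hb k
    obtain ⟨v, hv⟩ := ha (permHom m b k)
    refine ⟨artinHom m a w * v, ?_⟩
    rw [map_mul, MulAut.mul_apply, hw, map_mul, map_mul, hv, map_mul, Equiv.Perm.mul_apply, map_inv]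
    group
  | inv b hb =>
    intro k
    obtain ⟨w, hw⟩ := hb ((permHom m b)⁻¹ k)
    rw [perm_apply_inv] at hw
    refine ⟨((artinHom m b)⁻¹ w)⁻¹, ?_⟩
    rw [map_inv, map_inv]
    have := congrArg (fun z => (artinHom m b)⁻¹ z) hw
    rw [MulAut.inv_apply_self, map_mul, map_mul, map_inv] at this
    rw [this]
    group

theorem artinHom_isConjEnd {m : ℕ} (b : BraidGroup m) (hb : permHom m b = 1) :
    IsConjEnd (artinHom m b).toMonoidHom := by
  intro k
  obtain ⟨w, hw⟩ := artinHom_conj b k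
  rw [hb] at hw
  exact ⟨w, hw⟩

/-! ### The semidirect product and its map to the larger braid group -/

abbrev Gam (M : ℕ) := FG ⋊[artinHom (M + 1)] BraidGroup (M + 1)

/-- `u_k = σ_k σ_{k+1} ⋯ σ_M`, indexed by the number of factors. -/
def uAux (M : ℕ) : ℕ → BraidGroup (M + 2)
  | 0 => 1
  | d + 1 => bg (M + 2) (M - d) * uAux M d

def uu (M k : ℕ) : BraidGroup (M + 2) := uAux M (M + 1 - k)

theorem uu_ge {M k : ℕ} (h : M + 1 ≤ k) : uu M k = 1 := by
  rw [uu, show M + 1 - k = 0 by omega, uAux]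

theorem uu_rec (M k : ℕ) : uu M k = bg (M + 2) k * uu M (k + 1) := by
  by_cases h : k ≤ M
  · rw [uu, uu, show M + 1 - k = (M + 1 - (k + 1)) + 1 by omega, uAux,
      show M - (M + 1 - (k + 1)) = k by omega]
  · rw [uu_ge (by omega), uu_ge (by omega), bg_of_ge (by omega), one_mul]

theorem uu_comm_gt {M i : ℕ} (d : ℕ) : ∀ k, k + d = M + 1 → i + 1 < k →
    Commute (bg (M + 2) i) (uu M k) := by
  induction d with
  | zero => intro k hk _; rw [uu_ge (by omega)]; exact Commute.one_right _
  | succ d ih =>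
    intro k hk hik
    rw [uu_rec]
    exact (bg_far _ (by omega)).mul_right (ih (k + 1) (by omega) (by omega))

theorem uu_comm {M i k : ℕ} (h : i + 1 < k) : Commute (bg (M + 2) i) (uu M k) := by
  by_cases hk : k ≤ M + 1
  · exact uu_comm_gt (M + 1 - k) k (by omega) h
  · rw [uu_ge (by omega)]; exact Commute.one_right _

theorem uu_shift_aux {M i : ℕ} (hi : i + 1 ≤ M) (d : ℕ) : ∀ k, k + d = i →
    bg (M + 2) (i + 1) * uu M k = uu M k * bg (M + 2) i := by
  induction d with
  | zero =>
    intro k hk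
    obtain rfl : k = i := by omega
    rw [uu_rec M k, uu_rec M (k + 1)]
    have h1 := bg_braid (m := M + 2) (i := k) (by omega)
    have h2 : Commute (bg (M + 2) k) (uu M (k + 1 + 1)) := uu_comm (by omega)
    calc _ = bg (M + 2) (k + 1) * bg (M + 2) k * bg (M + 2) (k + 1) * uu M (k + 1 + 1) := by group
      _ = bg (M + 2) k * bg (M + 2) (k + 1) * (bg (M + 2) k * uu M (k + 1 + 1)) := by
        rw [← h1]; group
      _ = _ := by rw [h2.eq]; group
  | succ d ih =>
    intro k hk
    have h1 := ih (k + 1) (by omega)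
    have h2 : Commute (bg (M + 2) k) (bg (M + 2) (i + 1)) := bg_far _ (by omega)
    rw [uu_rec M k, ← mul_assoc, ← h2.eq, mul_assoc, h1, mul_assoc]

theorem uu_shift {M i k : ℕ} (hi : i + 1 ≤ M) (hk : k ≤ i) :
    bg (M + 2) (i + 1) * uu M k = uu M k * bg (M + 2) i :=
  uu_shift_aux hi (i - k) k (by omega)

def yB (M k : ℕ) : BraidGroup (M + 2) := (uu M (k + 1))⁻¹ * bg (M + 2) k ^ 2 * uu M (k + 1)

theorem grp_aux {G : Type*} [Group G] {s t u : G} (h : s * t * s = t * s * t) (hu : s * u = u * s) :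
    s * (u⁻¹ * t ^ 2 * u) = ((t * u)⁻¹ * s ^ 2 * (t * u)) * s := by
  have hu' : s * u⁻¹ = u⁻¹ * s := (Commute.inv_right (show Commute s u from hu)).eq
  have h1 : s * t ^ 2 = t⁻¹ * s ^ 2 * t * s := by
    calc s * t ^ 2 = t⁻¹ * (t * s * t) * t := by rw [pow_two]; group
      _ = t⁻¹ * (s * t * s) * t := by rw [h]
      _ = t⁻¹ * s * (t * s * t) := by group
      _ = t⁻¹ * s ^ 2 * t * s := by rw [← h, pow_two]; simp only [mul_assoc]
  calc _ = (s * u⁻¹) * t ^ 2 * u := by group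
    _ = u⁻¹ * (s * t ^ 2) * u := by rw [hu']; group
    _ = u⁻¹ * t⁻¹ * s ^ 2 * t * (s * u) := by rw [h1]; group
    _ = _ := by rw [hu]; group

theorem grp_aux2 {G : Type*} [Group G] {s t u : G} (h : s * t * s = t * s * t)
    (hu : s * u = u * s) :
    s * ((u⁻¹ * t ^ 2 * u) * ((t * u)⁻¹ * s ^ 2 * (t * u)))
      = ((u⁻¹ * t ^ 2 * u) * ((t * u)⁻¹ * s ^ 2 * (t * u))) * s := by
  have hu' : s * u⁻¹ = u⁻¹ * s := (Commute.inv_right (show Commute s u from hu)).eq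
  have h1 : s * (t * s ^ 2 * t) = t * s ^ 2 * t * s := by
    calc s * (t * s ^ 2 * t) = (s * t * s) * s * t := by rw [pow_two]; group
      _ = t * s * (t * s * t) := by rw [h]; group
      _ = _ := by rw [← h, pow_two]; group
  calc _ = (s * u⁻¹) * (t * s ^ 2 * t) * u := by group
    _ = u⁻¹ * (s * (t * s ^ 2 * t)) * u := by rw [hu']; group
    _ = u⁻¹ * (t * s ^ 2 * t) * (s * u) := by rw [h1]; group
    _ = _ := by rw [hu]; group

theorem yB_succ {M i : ℕ} (hi : i < M) :
    bg (M + 2) i * yB M (i + 1) = yB M i * bg (M + 2) i := by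
  unfold yB
  rw [uu_rec M (i + 1)]
  exact grp_aux (bg_braid (by omega)) (uu_comm (by omega)).eq

theorem yB_prod {M i : ℕ} (hi : i < M) :
    bg (M + 2) i * (yB M (i + 1) * yB M i) = yB M (i + 1) * yB M i * bg (M + 2) i := by
  unfold yB
  rw [uu_rec M (i + 1)]
  exact grp_aux2 (bg_braid (by omega)) (uu_comm (by omega)).eq

theorem yB_ne {M i k : ℕ} (hi : i < M) (h1 : k ≠ i) (h2 : k ≠ i + 1) :
    bg (M + 2) i * yB M k = yB M k * bg (M + 2) i := by
  unfold yB
  rcases lt_or_gt_of_ne h1 with h | h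
  · have a := uu_shift (M := M) (i := i) (k := k + 1) (by omega) (by omega)
    have b : Commute (bg (M + 2) k) (bg (M + 2) (i + 1)) := bg_far _ (by omega)
    have b2 := (b.pow_left 2).eq
    have a' : bg (M + 2) i * (uu M (k + 1))⁻¹ = (uu M (k + 1))⁻¹ * bg (M + 2) (i + 1) := by
      rw [eq_inv_mul_iff_mul_eq, ← mul_assoc, ← a, mul_inv_cancel_right]
    calc _ = (bg (M + 2) i * (uu M (k + 1))⁻¹) * bg (M + 2) k ^ 2 * uu M (k + 1) := by group
      _ = (uu M (k + 1))⁻¹ * (bg (M + 2) k ^ 2 * bg (M + 2) (i + 1)) * uu M (k + 1) := by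
        rw [a', b2]; group
      _ = (uu M (k + 1))⁻¹ * bg (M + 2) k ^ 2 * (bg (M + 2) (i + 1) * uu M (k + 1)) := by group
      _ = _ := by rw [a]; group
  · have a : Commute (bg (M + 2) i) (uu M (k + 1)) := uu_comm (by omega)
    have b : Commute (bg (M + 2) i) (bg (M + 2) k) := bg_far _ (by omega)
    exact ((a.inv_right.mul_right (b.pow_right 2)).mul_right a).eq

theorem incl_exists (M : ℕ) : ∃ F : BraidGroup (M + 1) →* BraidGroup (M + 2),
    ∀ i, i < (M + 1) - 1 → F (bg (M + 1) i) = bg (M + 2) i := by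
  apply bLift_exists
  · intro i j h _; exact (bg_far _ h).eq
  · intro i h; exact bg_braid (by omega)

noncomputable def incl (M : ℕ) : BraidGroup (M + 1) →* BraidGroup (M + 2) := (incl_exists M).choose
theorem incl_bg {M i : ℕ} (h : i < M) : incl M (bg (M + 1) i) = bg (M + 2) i :=
  (incl_exists M).choose_spec i (by omega)

noncomputable def fB (M : ℕ) : FG →* BraidGroup (M + 2) := FreeGroup.lift (yB M)
theorem fB_of (M k : ℕ) : fB M (FreeGroup.of k) = yB M k := by simp [fB]

theorem fB_gen {M i : ℕ} (hi : i < M) (x : FG) :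
    fB M (artin i x) = bg (M + 2) i * fB M x * (bg (M + 2) i)⁻¹ := by
  have : (fB M).comp (artin i).toMonoidHom
      = (MulAut.conj (bg (M + 2) i)).toMonoidHom.comp (fB M) := by
    refine FreeGroup.ext_hom _ _ fun k => ?_
    change fB M (artinFwd i (FreeGroup.of k))
      = bg (M + 2) i * fB M (FreeGroup.of k) * (bg (M + 2) i)⁻¹
    rw [eq_mul_inv_iff_mul_eq]
    have e1 := yB_succ hi
    have e2 := yB_prod hi
    by_cases h1 : k = i
    · subst h1
      simp only [artinFwd_eq, map_mul, map_inv, fB_of]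
      rw [mul_assoc, mul_assoc, inv_mul_eq_iff_eq_mul, ← mul_assoc, ← e2, ← mul_assoc, ← mul_assoc,
        e1]
    by_cases h2 : k = i + 1
    · subst h2
      rw [artinFwd_succ, fB_of, fB_of, e1]
    rw [artinFwd_ne h1 h2, fB_of, yB_ne hi h1 h2]
  exact DFunLike.congr_fun this x

theorem fB_conj {M : ℕ} (b : BraidGroup (M + 1)) : ∀ x : FG,
    fB M (artinHom (M + 1) b x) = incl M b * fB M x * (incl M b)⁻¹ := by
  induction b using bInd with
  | one => intro x; simp
  | gen i hi => intro x; rw [artinHom_bg hi, incl_bg (by omega)]; exact fB_gen (by omega) x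
  | mul a b ha hb =>
    intro x
    rw [map_mul, MulAut.mul_apply, ha, hb, map_mul]
    group
  | inv a ha =>
    intro x
    have := ha ((artinHom (M + 1) a)⁻¹ x)
    rw [MulAut.apply_inv_self] at this
    rw [map_inv, map_inv, this]
    group

noncomputable def iotaB (M : ℕ) : Gam M →* BraidGroup (M + 2) :=
  SemidirectProduct.lift (fB M) (incl M) (by
    intro b
    refine MonoidHom.ext fun x => ?_
    exact fB_conj b x)

theorem iotaB_inl (M : ℕ) (x : FG) : iotaB M (SemidirectProduct.inl x) = fB M x :=
  SemidirectProduct.lift_inl _ _ _ _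
theorem iotaB_inr (M : ℕ) (b : BraidGroup (M + 1)) :
    iotaB M (SemidirectProduct.inr b) = incl M b :=
  SemidirectProduct.lift_inr _ _ _ _

theorem permHom_yB (M k : ℕ) : permHom (M + 2) (yB M k) = 1 := by
  have : permHom (M + 2) (bg (M + 2) k) ^ 2 = 1 := by
    by_cases h : k < M + 2 - 1
    · rw [permHom_bg h, sq, Equiv.swap_mul_self]
    · rw [bg_of_ge (by omega)]; simp
  rw [yB, map_mul, map_mul, map_pow, this, map_inv]
  simp

theorem permHom_iotaB (M : ℕ) (γ : Gam M) :
    permHom (M + 2) (iotaB M γ) = permHom (M + 1) γ.right := by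
  have h1 : (permHom (M + 2)).comp (fB M) = 1 := by
    refine FreeGroup.ext_hom _ _ fun k => ?_
    simp [fB_of, permHom_yB]
  have h2 : ∀ b : BraidGroup (M + 1), permHom (M + 2) (incl M b) = permHom (M + 1) b := by
    intro b
    induction b using bInd with
    | one => simp
    | gen i hi => rw [incl_bg (by omega), permHom_bg hi, permHom_bg (by omega)]
    | mul a b ha hb => simp [ha, hb]
    | inv a ha => simp [ha]
  have h3 := DFunLike.congr_fun h1 γ.left
  rw [MonoidHom.comp_apply] at h3
  rw [← SemidirectProduct.inl_left_mul_inr_right γ, map_mul, iotaB_inl, iotaB_inr, map_mul, h3, h2]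
  simp

/-! ### The monomial representation -/

noncomputable def gS (M i : ℕ) : Gam M := SemidirectProduct.inr (bg (M + 1) i)
noncomputable def gY (M k : ℕ) : Gam M := SemidirectProduct.inl (FreeGroup.of k)

theorem gS_gY {M i : ℕ} (hi : i < M) (k : ℕ) :
    gS M i * gY M k = SemidirectProduct.inl (artinFwd i (FreeGroup.of k)) * gS M i := by
  have := SemidirectProduct.inl_aut (φ := artinHom (M + 1)) (bg (M + 1) i) (FreeGroup.of k)
  rw [artinHom_bg (by omega), map_inv, eq_mul_inv_iff_mul_eq] at this
  exact this.symm

theorem gS_gY_succ {M i : ℕ} (hi : i < M) : gS M i * gY M (i + 1) = gY M i * gS M i := by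
  rw [gS_gY hi, artinFwd_succ]; rfl

theorem gS_gY_ne {M i k : ℕ} (hi : i < M) (h1 : k ≠ i) (h2 : k ≠ i + 1) :
    gS M i * gY M k = gY M k * gS M i := by
  rw [gS_gY hi, artinFwd_ne h1 h2]; rfl

theorem gS_gY_prod {M i : ℕ} (hi : i < M) :
    gS M i * (gY M (i + 1) * gY M i) = gY M (i + 1) * gY M i * gS M i := by
  rw [← mul_assoc, gS_gY_succ hi, mul_assoc, gS_gY hi, artinFwd_eq, map_mul, map_mul, map_inv]
  change gY M i * ((gY M i)⁻¹ * gY M (i + 1) * gY M i * gS M i) = _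
  group

theorem gS_far (M : ℕ) {i j : ℕ} (h : i + 2 ≤ j) : gS M i * gS M j = gS M j * gS M i := by
  unfold gS
  rw [← map_mul, ← map_mul, (bg_far (M + 1) h).eq]

theorem gS_braid {M i : ℕ} (h : i + 1 < M) :
    gS M i * gS M (i + 1) * gS M i = gS M (i + 1) * gS M i * gS M (i + 1) := by
  unfold gS
  simp only [← map_mul]
  rw [bg_braid (by omega)]

open Classical in
noncomputable def cc (M i k : ℕ) : Gam M :=
  if M + 1 < k then 1 else if k = i + 1 then 1 else if k = i then gY M i
  else if i + 1 < k then gS M i else gS M (i - 1)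

noncomputable def rr (M i : ℕ) : Equiv.Perm (ℕ × Gam M) :=
  Equiv.prodShear (Equiv.swap i (i + 1)) (fun k => Equiv.mulLeft (cc M i k))

theorem rr_apply (M i k : ℕ) (γ : Gam M) :
    rr M i (k, γ) = (Equiv.swap i (i + 1) k, cc M i k * γ) := rfl

theorem rr_big {M i k : ℕ} (hi : i ≤ M) (hk : M + 1 < k) (γ : Gam M) : rr M i (k, γ) = (k, γ) := by
  rw [rr_apply, cc, if_pos hk, swap_gt (by omega), one_mul]
theorem rr_lt {M i k : ℕ} (hi : i + 1 ≤ M) (hk : k ≤ i) (γ : Gam M) :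
    rr M (i + 1) (k, γ) = (k, gS M i * γ) := by
  rw [rr_apply, cc, if_neg (by omega), if_neg (by omega), if_neg (by omega), if_neg (by omega),
    swap_lt (by omega)]
  rfl
theorem rr_gt {M i k : ℕ} (hk : i + 1 < k) (hk2 : k ≤ M + 1) (γ : Gam M) :
    rr M i (k, γ) = (k, gS M i * γ) := by
  rw [rr_apply, cc, if_neg (by omega), if_neg (by omega), if_neg (by omega), if_pos (by omega),
    swap_gt (by omega)]
theorem rr_eq {M i : ℕ} (hi : i ≤ M) (γ : Gam M) : rr M i (i, γ) = (i + 1, gY M i * γ) := by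
  rw [rr_apply, cc, if_neg (by omega), if_neg (by omega), if_pos rfl, Equiv.swap_apply_left]
theorem rr_succ {M i : ℕ} (hi : i ≤ M) (γ : Gam M) : rr M i (i + 1, γ) = (i, γ) := by
  rw [rr_apply, cc, if_neg (by omega), if_pos rfl, Equiv.swap_apply_right, one_mul]

theorem rr_far {M i j : ℕ} (h : i + 2 ≤ j) (hj : j ≤ M) :
    rr M i * rr M j = rr M j * rr M i := by
  refine Equiv.ext fun ⟨k, γ⟩ => ?_
  simp only [Equiv.Perm.mul_apply]
  obtain ⟨j, rfl⟩ : ∃ j', j = j' + 1 := ⟨j - 1, by omega⟩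
  by_cases h0 : M + 1 < k
  · simp only [rr_big (M := M) hj h0, rr_big (M := M) (i := i) (by omega) h0]
  rcases lt_trichotomy k i with h1 | h1 | h1
  · obtain ⟨i, rfl⟩ : ∃ i', i = i' + 1 := ⟨i - 1, by omega⟩
    simp only [rr_lt (M := M) (k := k) hj (by omega), rr_lt (M := M) (i := i) (k := k) (by omega) (by omega)]
    rw [← mul_assoc, ← mul_assoc, gS_far M (by omega)]
  · subst h1
    simp only [rr_lt (M := M) (k := k) hj (by omega), rr_eq (M := M) (i := k) (by omega),
      rr_lt (M := M) (k := k + 1) hj (by omega)]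
    rw [← mul_assoc, ← mul_assoc, gS_gY_ne (by omega) (by omega) (by omega)]
  rcases eq_or_lt_of_le (show i + 1 ≤ k by omega) with h2 | h2
  · subst h2
    simp only [rr_lt (M := M) (k := i + 1) hj (by omega), rr_succ (M := M) (i := i) (by omega),
      rr_lt (M := M) (k := i) hj (by omega)]
  rw [rr_gt (M := M) (i := i) (k := k) h2 (by omega)]
  rcases lt_trichotomy k (j + 1) with h3 | h3 | h3
  · simp only [rr_lt (M := M) (k := k) hj (by omega), rr_gt (M := M) (i := i) (k := k) h2 (by omega)]
    rw [← mul_assoc, ← mul_assoc, gS_far M (by omega)]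
  · subst h3
    simp only [rr_eq (M := M) hj, rr_gt (M := M) (i := i) (k := j + 1 + 1) (by omega) (by omega)]
    rw [← mul_assoc, ← mul_assoc, gS_gY_ne (by omega) (by omega) (by omega)]
  rcases eq_or_lt_of_le (show j + 1 + 1 ≤ k by omega) with h4 | h4
  · subst h4
    simp only [rr_succ (M := M) hj, rr_gt (M := M) (i := i) (k := j + 1) (by omega) (by omega)]
  simp only [rr_gt (M := M) (k := k) h4 (by omega), rr_gt (M := M) (i := i) (k := k) h2 (by omega)]
  rw [← mul_assoc, ← mul_assoc, gS_far M (by omega)]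

theorem rr_braid {M i : ℕ} (hi : i + 1 ≤ M) :
    rr M i * rr M (i + 1) * rr M i = rr M (i + 1) * rr M i * rr M (i + 1) := by
  refine Equiv.ext fun ⟨k, γ⟩ => ?_
  simp only [Equiv.Perm.mul_apply]
  by_cases h0 : M + 1 < k
  · simp only [rr_big (M := M) (i := i) (by omega) h0, rr_big (M := M) hi h0]
  rcases lt_trichotomy k i with h1 | h1 | h1
  · obtain ⟨i, rfl⟩ : ∃ i', i = i' + 1 := ⟨i - 1, by omega⟩
    have := gS_braid (M := M) (i := i) (by omega)
    simp only [rr_lt (M := M) (i := i) (k := k) (by omega) (by omega), rr_lt (M := M) (k := k) hi (by omega)]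
    simp only [← mul_assoc] at this ⊢
    rw [this]
  · subst h1
    simp only [rr_eq (M := M) (i := k) (by omega), rr_eq (M := M) hi,
      rr_gt (M := M) (i := k) (k := k + 1 + 1) (by omega) (by omega), rr_lt (M := M) (k := k) hi (by omega)]
    have := gS_gY_prod (M := M) (i := k) (by omega)
    simp only [← mul_assoc] at this ⊢
    rw [this]
  rcases eq_or_lt_of_le (show i + 1 ≤ k by omega) with h2 | h2
  · subst h2
    simp only [rr_succ (M := M) (i := i) (by omega), rr_lt (M := M) (k := i) hi (by omega), rr_eq (M := M) (i := i) (by omega),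
      rr_eq (M := M) hi, rr_gt (M := M) (i := i) (k := i + 1 + 1) (by omega) (by omega), rr_succ (M := M) hi]
    rw [← mul_assoc, ← mul_assoc, gS_gY_succ (by omega)]
  rcases eq_or_lt_of_le (show i + 1 + 1 ≤ k by omega) with h3 | h3
  · subst h3
    simp only [rr_gt (M := M) (i := i) (k := i + 1 + 1) (by omega) (by omega), rr_succ (M := M) hi,
      rr_succ (M := M) (i := i) (by omega), rr_lt (M := M) (k := i) hi (by omega)]
  have h4 : i + 1 < M := by omega
  have := gS_braid h4
  simp only [rr_gt (M := M) (i := i) (k := k) (by omega) (by omega),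
    rr_gt (M := M) (i := i + 1) (k := k) (by omega) (by omega)]
  simp only [← mul_assoc] at this ⊢
  rw [this]

theorem repR_exists (M : ℕ) : ∃ F : BraidGroup (M + 2) →* Equiv.Perm (ℕ × Gam M),
    ∀ i, i < (M + 2) - 1 → F (bg (M + 2) i) = rr M i := by
  apply bLift_exists
  · intro i j h hj; exact rr_far h (by omega)
  · intro i h; exact rr_braid (by omega)

noncomputable def repR (M : ℕ) : BraidGroup (M + 2) →* Equiv.Perm (ℕ × Gam M) :=
  (repR_exists M).choose
theorem repR_bg {M i : ℕ} (h : i ≤ M) : repR M (bg (M + 2) i) = rr M i :=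
  (repR_exists M).choose_spec i (by omega)

theorem repR_fst {M : ℕ} (w : BraidGroup (M + 2)) : ∀ x, (repR M w x).1 = permHom (M + 2) w x.1 := by
  induction w using bInd with
  | one => intro x; simp
  | gen i hi => intro x; rw [repR_bg (by omega), permHom_bg hi]; rfl
  | mul a b ha hb =>
    intro x
    rw [map_mul, map_mul, Equiv.Perm.mul_apply, Equiv.Perm.mul_apply, ha, hb]
  | inv a ha =>
    intro x
    rw [map_inv, map_inv, Equiv.Perm.eq_inv_iff_eq, ← ha, perm_apply_inv]

noncomputable def rmul {M : ℕ} (δ : Gam M) (x : ℕ × Gam M) : ℕ × Gam M := (x.1, x.2 * δ)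

theorem repR_rmul {M : ℕ} (w : BraidGroup (M + 2)) : ∀ (δ : Gam M) (x : ℕ × Gam M),
    repR M w (rmul δ x) = rmul δ (repR M w x) := by
  induction w using bInd with
  | one => intro δ x; simp
  | gen i hi =>
    intro δ x
    rw [repR_bg (by omega)]
    obtain ⟨k, γ⟩ := x
    simp only [rmul, rr_apply, mul_assoc]
  | mul a b ha hb =>
    intro δ x
    rw [map_mul, Equiv.Perm.mul_apply, Equiv.Perm.mul_apply, hb, ha]
  | inv a ha =>
    intro δ x
    rw [map_inv, Equiv.Perm.inv_eq_iff_eq, ha, perm_apply_inv]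

noncomputable def evE (M : ℕ) (x : ℕ × Gam M) : BraidGroup (M + 2) := uu M x.1 * iotaB M x.2

theorem iotaB_gS {M i : ℕ} (hi : i < M) : iotaB M (gS M i) = bg (M + 2) i := by
  rw [gS, iotaB_inr, incl_bg hi]
theorem iotaB_gY (M k : ℕ) : iotaB M (gY M k) = yB M k := by
  rw [gY, iotaB_inl, fB_of]

theorem evE_rr {M i : ℕ} (hi : i ≤ M) (x : ℕ × Gam M) (hx : x.1 ≤ M + 1) :
    evE M (rr M i x) = bg (M + 2) i * evE M x := by
  obtain ⟨k, γ⟩ := x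
  dsimp only at hx
  rcases lt_trichotomy k i with h1 | h1 | h1
  · obtain ⟨i, rfl⟩ : ∃ i', i = i' + 1 := ⟨i - 1, by omega⟩
    rw [rr_lt hi (by omega), evE, evE]
    dsimp only
    rw [map_mul, iotaB_gS (by omega), ← mul_assoc, ← mul_assoc, uu_shift hi (by omega)]
  · subst h1
    rw [rr_eq hi, evE, evE]
    dsimp only
    rw [map_mul, iotaB_gY, uu_rec M k, yB, pow_two]
    group
  rcases eq_or_lt_of_le (show i + 1 ≤ k by omega) with h2 | h2
  · subst h2
    rw [rr_succ hi, evE, evE]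
    dsimp only
    rw [uu_rec M i, mul_assoc]
  · rw [rr_gt h2 hx, evE, evE]
    dsimp only
    rw [map_mul, iotaB_gS (by omega), ← mul_assoc, ← mul_assoc, (uu_comm h2).eq]

theorem evE_repR {M : ℕ} (w : BraidGroup (M + 2)) : ∀ x : ℕ × Gam M,
    ((repR M w x).1 ≤ M + 1 ↔ x.1 ≤ M + 1) ∧
    (x.1 ≤ M + 1 → evE M (repR M w x) = w * evE M x) := by
  induction w using bInd with
  | one => intro x; simp
  | gen i hi =>
    intro x
    rw [repR_bg (by omega)]
    refine ⟨?_, evE_rr (by omega) x⟩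
    change Equiv.swap i (i + 1) x.1 ≤ M + 1 ↔ _
    rw [Equiv.swap_apply_def]
    split_ifs <;> omega
  | mul a b ha hb =>
    intro x
    rw [map_mul, Equiv.Perm.mul_apply]
    refine ⟨(ha _).1.trans (hb _).1, fun hx => ?_⟩
    rw [(ha _).2 ((hb x).1.2 hx), (hb x).2 hx, mul_assoc]
  | inv a ha =>
    intro x
    have := ha ((repR M a)⁻¹ x)
    rw [perm_apply_inv] at this
    rw [map_inv]
    refine ⟨this.1.symm, fun hx => ?_⟩
    rw [this.2 (this.1.1 hx), inv_mul_cancel_left]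

/-! ### Unique roots in pure braid groups -/

noncomputable def gam (M : ℕ) (w : BraidGroup (M + 2)) : Gam M := (repR M w (M + 1, 1)).2

theorem repR_pure {M : ℕ} (w : BraidGroup (M + 2)) (hw : permHom (M + 2) w = 1) (δ : Gam M) :
    repR M w (M + 1, δ) = (M + 1, gam M w * δ) := by
  have h1 := repR_rmul w δ (M + 1, 1)
  have h2 := repR_fst w (M + 1, (1 : Gam M))
  rw [hw] at h2
  simp only [rmul, one_mul] at h1
  rw [h1, h2]; rfl

theorem iotaB_gam {M : ℕ} (w : BraidGroup (M + 2)) (hw : permHom (M + 2) w = 1) :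
    iotaB M (gam M w) = w := by
  have h1 := (evE_repR w (M + 1, (1 : Gam M))).2 le_rfl
  rw [repR_pure w hw] at h1
  simp only [evE, uu_ge le_rfl, mul_one, one_mul, map_one] at h1
  exact h1

theorem gam_pow {M : ℕ} (w : BraidGroup (M + 2)) (hw : permHom (M + 2) w = 1) (n : ℕ) :
    gam M (w ^ n) = gam M w ^ n := by
  induction n with
  | zero => simp [gam]
  | succ n ih =>
    have h : permHom (M + 2) (w ^ n) = 1 := by rw [map_pow, hw, one_pow]
    have h1 : repR M (w ^ (n + 1)) (M + 1, 1) = (M + 1, gam M (w ^ n) * gam M w) := by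
      rw [pow_succ, map_mul, Equiv.Perm.mul_apply, repR_pure w hw, repR_pure _ h, mul_one]
    rw [gam, h1, pow_succ, ih]

noncomputable def opG {M : ℕ} (γ : Gam M) : QF →ₗ[ℚ] QF :=
  opT γ.left (artinHom (M + 1) γ.right).toMonoidHom

theorem opG_mul {M : ℕ} (γ δ : Gam M) : opG (γ * δ) = opG γ * opG δ := by
  rw [opG, opG, opG, opT_mul]
  congr 1
  rw [SemidirectProduct.mul_right, map_mul]; rfl

theorem opG_one {M : ℕ} : opG (1 : Gam M) = 1 := by
  refine LinearMap.ext fun u => ?_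
  rw [opG, opT_apply, SemidirectProduct.one_left, el_one, one_mul, SemidirectProduct.one_right,
    map_one]
  induction u using QF_induction with
  | h1 f => rw [indA_el]; rfl
  | h2 a b ha hb => rw [map_add, ha, hb]; rfl
  | h3 q a ha => rw [map_smul, ha]; rfl

theorem opG_pow {M : ℕ} (γ : Gam M) (n : ℕ) : opG (γ ^ n) = opG γ ^ n := by
  induction n with
  | zero => rw [pow_zero, pow_zero, opG_one]
  | succ n ih => rw [pow_succ, pow_succ, opG_mul, ih]

theorem pure_unique_root (m : ℕ) : ∀ (x y : BraidGroup m), permHom m x = 1 → permHom m y = 1 →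
    ∀ N : ℕ, 1 ≤ N → x ^ N = y ^ N → x = y := by
  have triv : ∀ m : ℕ, m ≤ 1 → ∀ x : BraidGroup m, x = 1 := by
    intro m hm x
    induction x using bInd with
    | one => rfl
    | gen i hi => omega
    | mul a b ha hb => rw [ha, hb, one_mul]
    | inv a ha => rw [ha, inv_one]
  match m with
  | 0 => intro x y _ _ _ _ _; rw [triv 0 (by omega) x, triv 0 (by omega) y]
  | 1 => intro x y _ _ _ _ _; rw [triv 1 (by omega) x, triv 1 (by omega) y]
  | M + 2 =>
    intro x y hx hy N hN h
    have ih := pure_unique_root (M + 1)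
    have h1 : gam M x ^ N = gam M y ^ N := by rw [← gam_pow x hx, ← gam_pow y hy, h]
    have px : permHom (M + 1) (gam M x).right = 1 := by
      rw [← permHom_iotaB, iotaB_gam x hx, hx]
    have py : permHom (M + 1) (gam M y).right = 1 := by
      rw [← permHom_iotaB, iotaB_gam y hy, hy]
    have h2 : (gam M x).right = (gam M y).right := by
      apply ih _ _ px py N hN
      have := congrArg SemidirectProduct.rightHom h1
      rw [map_pow, map_pow] at this
      exact this
    have h3 : opG (gam M x) ^ N = opG (gam M y) ^ N := by rw [← opG_pow, ← opG_pow, h1]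
    have h4 : (gam M x).left = (gam M y).left := by
      unfold opG at h3
      rw [← h2] at h3
      exact opT_unique_root _ _ _ (artinHom_isConjEnd _ px) N hN h3
    have h5 : gam M x = gam M y := SemidirectProduct.ext h4 h2
    rw [← iotaB_gam x hx, h5, iotaB_gam y hy]

/-- If a positive power of `x` commutes with `y`, then `x ^ m!` commutes with `y`. -/
theorem commute_pow_factorial {m : ℕ} (x y : BraidGroup m) (N : ℕ) (hN : 1 ≤ N)
    (h : Commute (x ^ N) y) : Commute (x ^ m.factorial) y := by
  have hp := permHom_pow_factorial x
  have h1 : y * x ^ m.factorial * y⁻¹ = x ^ m.factorial := by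
    apply pure_unique_root m _ _ _ hp N hN
    · rw [conj_pow, ← pow_mul, mul_comm m.factorial N, pow_mul, mul_inv_eq_iff_eq_mul]
      exact ((h.pow_left _).eq).symm
    · rw [map_mul, map_mul, hp, map_inv]; simp
  rw [mul_inv_eq_iff_eq_mul] at h1
  exact h1.symm

end HW
/-! ### The Hurwitz action -/
namespace HW

section Hurwitz
variable {G : Type*} [Group G] {n : ℕ}

theorem act_mul (w₁ w₂ : FreeGroup (Fin (n - 1))) (s : Fin n → G) :
    hurwitzAct (w₁ * w₂) s = hurwitzAct w₂ (hurwitzAct w₁ s) := by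
  simp only [hurwitzAct, map_mul, MulOpposite.unop_mul, Equiv.Perm.mul_apply]

theorem act_one (s : Fin n → G) : hurwitzAct 1 s = s := by
  simp [hurwitzAct]

theorem act_injective (w : FreeGroup (Fin (n - 1))) :
    Function.Injective (hurwitzAct (G := G) (n := n) w) :=
  Equiv.injective _

theorem act_gen {l : ℕ} (h : l + 1 < n) (s : Fin n → G) :
    hurwitzAct (genWord n (l + 1)) s = hEquiv (G := G) (n := n) ⟨l, by omega⟩ s := by
  rw [genWord, dif_pos ⟨by omega, by omega⟩, hurwitzAct, FreeGroup.lift_apply_of]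
  rfl

/-- Extend a tuple to all natural indices by `1`. -/
def ext (s : Fin n → G) (k : ℕ) : G := if h : k < n then s ⟨k, h⟩ else 1

theorem ext_inj {s t : Fin n → G} (h : ∀ k, ext s k = ext t k) : s = t := by
  funext k
  have := h k.val
  rw [ext, ext, dif_pos k.isLt, dif_pos k.isLt] at this
  exact this

theorem ext_gen_eq {l : ℕ} (h : l + 1 < n) (s : Fin n → G) :
    ext (hurwitzAct (genWord n (l + 1)) s) l = ext s (l + 1) := by
  rw [act_gen h, ext, ext, dif_pos (by omega), dif_pos (by omega)]
  simp [hEquiv]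

theorem ext_gen_succ {l : ℕ} (h : l + 1 < n) (s : Fin n → G) :
    ext (hurwitzAct (genWord n (l + 1)) s) (l + 1)
      = (ext s (l + 1))⁻¹ * ext s l * ext s (l + 1) := by
  rw [act_gen h, ext, ext, ext, dif_pos (by omega), dif_pos (by omega), dif_pos (by omega)]
  simp [hEquiv]

theorem ext_gen_ne {l k : ℕ} (h : l + 1 < n) (s : Fin n → G) (h1 : k ≠ l) (h2 : k ≠ l + 1) :
    ext (hurwitzAct (genWord n (l + 1)) s) k = ext s k := by
  rw [act_gen h, ext, ext]
  split_ifs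
  · simp [hEquiv, h1, h2]
  · rfl

/-- The word `σ_1 σ_2 ⋯ σ_l`. -/
def wA (n : ℕ) : ℕ → FreeGroup (Fin (n - 1))
  | 0 => 1
  | l + 1 => wA n l * genWord n (l + 1)

/-- The word `σ_l ⋯ σ_2 σ_1`. -/
def wR (n : ℕ) : ℕ → FreeGroup (Fin (n - 1))
  | 0 => 1
  | l + 1 => genWord n (l + 1) * wR n l

theorem inv_list (n l : ℕ) :
    ((List.range l).map (fun t => (genWord n (t + 1))⁻¹)).prod = (wR n l)⁻¹ := by
  induction l with
  | zero => simp [wR]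
  | succ l ih => rw [List.range_succ, List.map_append, List.prod_append, ih, wR]; simp

theorem rev_list (n l : ℕ) :
    ((List.range l).reverse.map (fun t => genWord n (t + 1))).prod = wR n l := by
  induction l with
  | zero => simp [wR]
  | succ l ih =>
    rw [List.range_succ, List.reverse_append, List.map_append, List.prod_append, ih, wR]; simp

theorem cWord_prod (n l : ℕ) :
    ((List.range l).map (fun t => cWord n (t + 1))).prod = wA n l * wR n l := by
  induction l with
  | zero => simp [wA, wR]
  | succ l ih =>
    rw [List.range_succ, List.map_append, List.prod_append, ih, wA, wR]
    simp only [List.map_cons, List.map_nil, List.prod_cons, List.prod_nil, mul_one, cWord,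
      Nat.add_sub_cancel, inv_list, rev_list, pow_two]
    group

/-- The product `S 1 * S 2 * ⋯ * S l`. -/
def dP (S : ℕ → G) : ℕ → G
  | 0 => 1
  | l + 1 => dP S l * S (l + 1)

theorem ext_wA (s : Fin n → G) (l : ℕ) (hl : l < n) :
    (∀ k, k < l → ext (hurwitzAct (wA n l) s) k = ext s (k + 1)) ∧
    ext (hurwitzAct (wA n l) s) l = (dP (ext s) l)⁻¹ * ext s 0 * dP (ext s) l ∧
    (∀ k, l < k → ext (hurwitzAct (wA n l) s) k = ext s k) := by
  induction l with
  | zero => simp [wA, act_one, dP]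
  | succ l ih =>
    obtain ⟨i1, i2, i3⟩ := ih (by omega)
    refine ⟨fun k hk => ?_, ?_, fun k hk => ?_⟩
    · rw [wA, act_mul]
      rcases eq_or_lt_of_le (show k ≤ l by omega) with rfl | h
      · rw [ext_gen_eq hl, i3 _ (by omega)]
      · rw [ext_gen_ne hl _ (by omega) (by omega), i1 k h]
    · rw [wA, act_mul, ext_gen_succ hl, i2, i3 _ (by omega), dP]; group
    · rw [wA, act_mul, ext_gen_ne hl _ (by omega) (by omega), i3 k (by omega)]

theorem ext_wR (l : ℕ) (hl : l < n) : ∀ t : Fin n → G,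
    ext (hurwitzAct (wR n l) t) 0 = ext t l ∧
    (∀ k, k < l → ext (hurwitzAct (wR n l) t) (k + 1) = (ext t l)⁻¹ * ext t k * ext t l) ∧
    (∀ k, l < k → ext (hurwitzAct (wR n l) t) k = ext t k) := by
  induction l with
  | zero => intro t; simp [wR, act_one]
  | succ l ih =>
    intro t
    obtain ⟨i1, i2, i3⟩ := ih (by omega) (hurwitzAct (genWord n (l + 1)) t)
    rw [wR, act_mul]
    rw [ext_gen_eq hl] at i1 i2
    refine ⟨i1, fun k hk => ?_, fun k hk => ?_⟩
    · rcases eq_or_lt_of_le (show k ≤ l by omega) with rfl | h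
      · rw [i3 _ (by omega), ext_gen_succ hl]
      · rw [i2 k h, ext_gen_ne hl _ (by omega) (by omega)]
    · rw [i3 k (by omega), ext_gen_ne hl _ (by omega) (by omega)]

/-- The word `c_1 ⋯ c_l`. -/
def wQ (n l : ℕ) : FreeGroup (Fin (n - 1)) := wA n l * wR n l

theorem ext_wQ (s : Fin n → G) (l : ℕ) (hl : l < n) :
    ext (hurwitzAct (wQ n l) s) 0 = (dP (ext s) l)⁻¹ * ext s 0 * dP (ext s) l ∧
    (∀ k, k < l → ext (hurwitzAct (wQ n l) s) (k + 1) =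
      ((dP (ext s) l)⁻¹ * ext s 0 * dP (ext s) l)⁻¹ * ext s (k + 1) *
      ((dP (ext s) l)⁻¹ * ext s 0 * dP (ext s) l)) ∧
    (∀ k, l < k → ext (hurwitzAct (wQ n l) s) k = ext s k) := by
  obtain ⟨a1, a2, a3⟩ := ext_wA s l hl
  obtain ⟨b1, b2, b3⟩ := ext_wR l hl (hurwitzAct (wA n l) s)
  rw [wQ, act_mul]
  refine ⟨by rw [b1, a2], fun k hk => ?_, fun k hk => ?_⟩
  · rw [b2 k hk, a2, a1 k hk]
  · rw [b3 k hk, a3 k hk]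

theorem dP_conj (S T : ℕ → G) (x : G) (l : ℕ) (h : ∀ k, k < l → T (k + 1) = x⁻¹ * S (k + 1) * x) :
    dP T l = x⁻¹ * dP S l * x := by
  induction l with
  | zero => simp [dP]
  | succ l ih =>
    rw [dP, dP, ih fun k hk => h k (by omega), h l (by omega)]; group

theorem ext_wQ_pow (s : Fin n → G) (l : ℕ) (hl : l < n) (C D : G) (hD : D = dP (ext s) l)
    (hC : C = ext s 0 * D) (r : ℕ) :
    ext (hurwitzAct (wQ n l ^ r) s) 0 = (C ^ r)⁻¹ * ext s 0 * C ^ r ∧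
    (∀ k, k < l → ext (hurwitzAct (wQ n l ^ r) s) (k + 1) =
      ((D ^ r)⁻¹ * C ^ r)⁻¹ * ext s (k + 1) * ((D ^ r)⁻¹ * C ^ r)) ∧
    (∀ k, l < k → ext (hurwitzAct (wQ n l ^ r) s) k = ext s k) := by
  induction r with
  | zero => simp [act_one]
  | succ r ih =>
    obtain ⟨i1, i2, i3⟩ := ih
    obtain ⟨q1, q2, q3⟩ := ext_wQ (hurwitzAct (wQ n l ^ r) s) l hl
    have hd := dP_conj _ _ _ l i2
    rw [← hD] at hd
    have hd' : dP (ext (hurwitzAct (wQ n l ^ r) s)) l = (C ^ r)⁻¹ * D * C ^ r := by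
      rw [hd]
      have : Commute (D ^ r) D := (Commute.refl D).pow_left r
      calc _ = (C ^ r)⁻¹ * (D ^ r * D) * (D ^ r)⁻¹ * C ^ r := by group
        _ = _ := by rw [this.eq]; group
    have e0 : ext s 0 = C * D⁻¹ := by rw [hC]; group
    have hx : (dP (ext (hurwitzAct (wQ n l ^ r) s)) l)⁻¹ * ext (hurwitzAct (wQ n l ^ r) s) 0 *
        dP (ext (hurwitzAct (wQ n l ^ r) s)) l = (C ^ r)⁻¹ * (D⁻¹ * C) * C ^ r := by
      rw [hd', i1, e0]; group
    rw [hx] at q1 q2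
    rw [pow_succ, act_mul]
    have cC : C * C ^ r = C ^ (r + 1) := (pow_succ' C r).symm
    have cD : D * D ^ r = D ^ (r + 1) := (pow_succ' D r).symm
    refine ⟨?_, fun k hk => ?_, fun k hk => ?_⟩
    · rw [q1, e0, ← cC]; group
    · rw [q2 k hk, i2 k hk]
      have : (D ^ r)⁻¹ * C ^ r * ((C ^ r)⁻¹ * (D⁻¹ * C) * C ^ r) =
          (D ^ (r + 1))⁻¹ * C ^ (r + 1) := by
        rw [← cC, ← cD]; group
      rw [← this]; group
    · rw [q3 k hk, i3 k hk]

theorem prod_finRange (s : Fin n → G) (l : ℕ) (hl : l + 1 ≤ n) :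
    ((List.finRange (l + 1)).map (fun t => s (Fin.castLE hl t))).prod = ext s 0 * dP (ext s) l := by
  have h1 : (List.finRange (l + 1)).map (fun t => s (Fin.castLE hl t))
      = (List.range (l + 1)).map (ext s) := by
    rw [← List.map_coe_finRange_eq_range, List.map_map]
    refine List.map_congr_left fun t _ => ?_
    rw [Function.comp_apply, ext, dif_pos (by have := t.isLt; omega)]
    rfl
  rw [h1]
  clear h1 hl
  induction l with
  | zero => simp [dP]
  | succ l ih => rw [List.range_succ, List.map_append, List.prod_append, ih, dP]; simp [mul_assoc]

theorem exists_pow_fix (s : Fin n → G) (hfin : (hurwitzOrbit s).Finite)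
    (w : FreeGroup (Fin (n - 1))) : ∃ N : ℕ, 1 ≤ N ∧ hurwitzAct (w ^ N) s = s := by
  have : ¬ Function.Injective (fun r : ℕ => hurwitzAct (w ^ r) s) := by
    intro hi
    refine Set.infinite_range_of_injective hi (hfin.subset ?_)
    rintro _ ⟨r, rfl⟩
    exact ⟨_, rfl⟩
  simp only [Function.Injective, not_forall] at this
  obtain ⟨a, b, hab, hne⟩ := this
  wlog h : a < b generalizing a b
  · exact this b a hab.symm (Ne.symm hne) (by omega)
  refine ⟨b - a, by omega, ?_⟩
  have e : w ^ b = w ^ (b - a) * w ^ a := by rw [← pow_add]; congr 1; omega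
  rw [e, act_mul] at hab
  exact (act_injective _ hab).symm

theorem act_pow_fix (s : Fin n → G) (w : FreeGroup (Fin (n - 1))) (h : hurwitzAct w s = s)
    (k : ℕ) : hurwitzAct (w ^ k) s = s := by
  induction k with
  | zero => rw [pow_zero, act_one]
  | succ k ih => rw [pow_succ, act_mul, ih, h]

end Hurwitz

end HW

/-- If the Hurwitz orbit of `s` is finite and the partial Coxeter element
`C = β_1 β_2 ⋯ β_j` is periodic, then `s·(c_1 c_2 ⋯ c_{j-1})^r = s` for some `1 ≤ r ≤ m!`. -/
theorem hurwitzAct_cWord_prod_pow_eq_self {m n : ℕ} (s : Fin n → BraidGroup m) (j : ℕ)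
    (h1 : 2 ≤ j) (h2 : j ≤ n)
    (hfin : (hurwitzOrbit s).Finite)
    (hper : IsPeriodic (((List.finRange j).map (fun t => s (Fin.castLE (by omega) t))).prod)) :
    ∃ r : ℕ, 1 ≤ r ∧ r ≤ m.factorial ∧
      hurwitzAct ((((List.range (j - 1)).map (fun t => cWord n (t + 1))).prod) ^ r) s = s := by
  obtain ⟨l, rfl⟩ : ∃ l, j = l + 1 := ⟨j - 1, by omega⟩
  obtain ⟨k, hk, hcen⟩ := hper
  rw [HW.prod_finRange s l h2] at hcen
  refine ⟨m.factorial, Nat.factorial_pos m, le_rfl, ?_⟩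
  rw [Nat.add_sub_cancel, HW.cWord_prod]
  change hurwitzAct (HW.wQ n l ^ m.factorial) s = s
  obtain ⟨N, hN, hfix⟩ := HW.exists_pow_fix s hfin (HW.wQ n l)
  have hfix2 := HW.act_pow_fix s _ hfix k
  rw [← pow_mul] at hfix2
  have hl : l < n := by omega
  generalize hD : HW.dP (HW.ext s) l = D at hcen
  generalize hC : HW.ext s 0 * D = C at hcen
  have hpos : 1 ≤ N * k := Nat.mul_pos hN hk
  have hCN : ∀ y, Commute (C ^ (N * k)) y := by
    intro y
    rw [mul_comm, pow_mul]
    have hy : Commute (C ^ k) y := (Subgroup.mem_center_iff.1 hcen y).symm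
    exact hy.pow_left N
  have hCf : ∀ y, Commute (C ^ m.factorial) y := fun y =>
    HW.commute_pow_factorial C y _ hpos (hCN y)
  have hDN : ∀ t, t < l → Commute (D ^ (N * k)) (HW.ext s (t + 1)) := by
    intro t ht
    have h := (HW.ext_wQ_pow s l hl C D hD.symm hC.symm (N * k)).2.1 t ht
    rw [hfix2] at h
    have hc := (hCN (HW.ext s (t + 1))).eq
    have hc2 := (hCN (D ^ (N * k))).eq
    generalize HW.ext s (t + 1) = y at h hc ⊢
    generalize C ^ (N * k) = c at h hc hc2
    generalize D ^ (N * k) = d at h hc2 ⊢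
    have e : (d⁻¹ * c) * y = y * (d⁻¹ * c) := by
      nth_rewrite 1 [h]
      group
    have e2 : d⁻¹ * y * c = y * d⁻¹ * c := by
      rw [mul_assoc, ← hc, ← mul_assoc, e, mul_assoc]
    have e3 : Commute d⁻¹ y := mul_right_cancel e2
    exact (Commute.inv_left_iff).1 e3
  have hDf : ∀ t, t < l → Commute (D ^ m.factorial) (HW.ext s (t + 1)) := fun t ht =>
    HW.commute_pow_factorial D _ _ hpos (hDN t ht)
  obtain ⟨f1, f2, f3⟩ := HW.ext_wQ_pow s l hl C D hD.symm hC.symm m.factorial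
  refine HW.ext_inj fun t => ?_
  rcases Nat.lt_or_ge l t with ht | ht
  · exact f3 t ht
  rcases t with _ | t
  · rw [f1, mul_assoc, ← (hCf _).eq, inv_mul_cancel_left]
  · have h : Commute ((D ^ m.factorial)⁻¹ * C ^ m.factorial) (HW.ext s (t + 1)) :=
      ((hDf t (by omega)).inv_left).mul_left (hCf _)
    rw [f2 t (by omega), mul_assoc, ← h.eq, inv_mul_cancel_left]
end

section
/- Let α ∈ B_3 be a periodic braid of period 3, i.e. α^3 lies in the center of B_3 but α does not. Let β, γ ∈ B_3 and suppose that all three braids βγ, (α^{-1}βα)γ, and (α^{-2}βα^2)γ are periodic. Then β ∈ Z(α) or γ ∈ Z(α), i.e. β or γ commutes with α. -/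
/-- Reduced words in `x`, `y` beginning and ending with `x`, of a given length. -/
inductive RedWord {Q : Type*} [Group Q] (x y : Q) : ℕ → Q → Prop
  | base : RedWord x y 0 x
  | step (n : ℕ) (w : Q) (e : ℤ) (he : ¬ (3 : ℤ) ∣ e) (h : RedWord x y n w) :
      RedWord x y (n + 1) (x * y ^ e * w)

section Abstract
variable {Q : Type*} [Group Q] {x y : Q}

theorem zpow_mod_three (hy : y ^ 3 = 1) (e : ℤ) : y ^ e = y ^ (e % 3) := by
  have h : y ^ (3 : ℤ) = 1 := by exact_mod_cast hy
  conv_lhs => rw [← Int.emod_add_mul_ediv e 3, zpow_add, zpow_mul, h, one_zpow, mul_one]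

theorem zpow_of_dvd (hy : y ^ 3 = 1) (e : ℤ) (he : (3 : ℤ) ∣ e) : y ^ e = 1 := by
  rw [zpow_mod_three hy, Int.emod_eq_zero_of_dvd he, zpow_zero]

theorem RedWord.mem (T : Subsemigroup Q) (hy : y ^ 3 = 1) (h1 : x * y ∈ T) (h2 : x * y ^ 2 ∈ T)
    {n : ℕ} {w : Q} (hw : RedWord x y n w) : ∀ e : ℤ, ¬ (3 : ℤ) ∣ e → w * y ^ e ∈ T := by
  have key : ∀ e : ℤ, ¬ (3 : ℤ) ∣ e → x * y ^ e ∈ T := by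
    intro e he
    rw [zpow_mod_three hy]
    have : e % 3 = 1 ∨ e % 3 = 2 := by omega
    rcases this with h | h
    · rw [h]; simpa using h1
    · rw [h]; exact_mod_cast h2
  induction hw with
  | base => exact key
  | step n w f hf h ih =>
    intro e he
    have := T.mul_mem (key f hf) (ih e he)
    simpa [mul_assoc] using this

theorem RedWord.right {n : ℕ} {w : Q} (hw : RedWord x y n w) :
    w = x ∨ ∃ m v, ∃ f : ℤ, m < n ∧ RedWord x y m v ∧ ¬ (3 : ℤ) ∣ f ∧ w = v * y ^ f * x := by
  induction hw with
  | base => left; rfl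
  | step n w e he h ih =>
    right
    rcases ih with rfl | ⟨m, v, f, hm, hv, hf, rfl⟩
    · exact ⟨0, _, e, by omega, .base, he, rfl⟩
    · exact ⟨m + 1, _, f, by omega, .step m v e he hv, hf, by simp [mul_assoc]⟩

theorem normal_form (hx : x ^ 2 = 1) (hy : y ^ 3 = 1) (hgen : Subgroup.closure {x, y} = ⊤) (g : Q) :
    (∃ i : ℤ, g = y ^ i) ∨ ∃ n w, ∃ i j : ℤ, RedWord x y n w ∧ g = y ^ i * w * y ^ j := by
  have hxx : x * x = 1 := by rw [← pow_two, hx]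
  have hxi : x⁻¹ = x := inv_eq_of_mul_eq_one_left hxx
  have hX : ∀ g : Q, ((∃ i : ℤ, g = y ^ i) ∨
      ∃ n w, ∃ i j : ℤ, RedWord x y n w ∧ g = y ^ i * w * y ^ j) →
      ((∃ i : ℤ, x * g = y ^ i) ∨
      ∃ n w, ∃ i j : ℤ, RedWord x y n w ∧ x * g = y ^ i * w * y ^ j) := by
    rintro g (⟨i, rfl⟩ | ⟨n, w, i, j, hw, rfl⟩)
    · exact .inr ⟨0, x, 0, i, .base, by simp⟩
    · by_cases hi : (3 : ℤ) ∣ i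
      · rw [zpow_of_dvd hy i hi, one_mul]
        cases hw with
        | base => exact .inl ⟨j, by rw [← mul_assoc, hxx, one_mul]⟩
        | step n w e he h =>
          exact .inr ⟨n, w, e, j, h, by simp only [← mul_assoc, hxx, one_mul]⟩
      · exact .inr ⟨n + 1, _, 0, j, .step n w i hi hw, by simp [mul_assoc]⟩
  have hY : ∀ (k : ℤ) (g : Q), ((∃ i : ℤ, g = y ^ i) ∨
      ∃ n w, ∃ i j : ℤ, RedWord x y n w ∧ g = y ^ i * w * y ^ j) →
      ((∃ i : ℤ, y ^ k * g = y ^ i) ∨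
      ∃ n w, ∃ i j : ℤ, RedWord x y n w ∧ y ^ k * g = y ^ i * w * y ^ j) := by
    rintro k g (⟨i, rfl⟩ | ⟨n, w, i, j, hw, rfl⟩)
    · exact .inl ⟨k + i, by rw [zpow_add]⟩
    · exact .inr ⟨n, w, k + i, j, hw, by rw [zpow_add]; simp [mul_assoc]⟩
  have hg : g ∈ Subgroup.closure {x, y} := by rw [hgen]; trivial
  induction hg using Subgroup.closure_induction_left with
  | one => exact .inl ⟨0, by simp⟩
  | mul_left a ha b hb ih =>
    rcases ha with rfl | rfl
    · exact hX _ ih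
    · simpa using hY 1 _ ih
  | inv_mul_cancel a ha b hb ih =>
    rcases ha with rfl | rfl
    · rw [hxi]; exact hX _ ih
    · simpa using hY (-1) _ ih

theorem pow_conj_one {h g : Q} {n : ℕ} (hg : g ^ n = 1) : (h⁻¹ * g * h) ^ n = 1 := by
  have := conj_pow (i := n) (a := h⁻¹) (b := g)
  rw [inv_inv] at this
  rw [this, hg]; simp

theorem sandwich_conj (T : Subsemigroup Q) (hT : ∀ t ∈ T, ∀ k : ℕ, 1 ≤ k → t ^ k ≠ 1)
    (hx : x ^ 2 = 1) (hy : y ^ 3 = 1) (h1 : x * y ∈ T) (h2 : x * y ^ 2 ∈ T) :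
    ∀ (n : ℕ) (w : Q), RedWord x y n w → ∀ i j : ℤ, (y ^ i * w * y ^ j) ^ 3 = 1 →
      ∃ h, ∃ k : ℤ, h⁻¹ * (y ^ i * w * y ^ j) * h = y ^ k := by
  have hxx : x * x = 1 := by rw [← pow_two, hx]
  have hxi : x⁻¹ = x := inv_eq_of_mul_eq_one_left hxx
  intro n
  induction n using Nat.strong_induction_on with
  | _ n ih =>
  intro w hw i j h
  have hc : (w * y ^ (j + i)) ^ 3 = 1 := by
    have := pow_conj_one (h := y ^ i) h
    rw [← this]; congr 1
    rw [zpow_add]; group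
  by_cases hd : (3 : ℤ) ∣ j + i
  swap
  · exact absurd hc (hT _ (hw.mem T hy h1 h2 _ hd) 3 (by norm_num))
  rw [zpow_of_dvd hy _ hd, mul_one] at hc
  have hyi : y ^ j = (y ^ i)⁻¹ := by
    rw [eq_inv_iff_mul_eq_one, ← zpow_add, zpow_of_dvd hy _ hd]
  suffices ∃ h, ∃ k : ℤ, h⁻¹ * w * h = y ^ k by
    obtain ⟨h, k, hk⟩ := this
    refine ⟨y ^ i * h, k, ?_⟩
    rw [← hk, hyi]; group
  cases hw with
  | base =>
    refine ⟨1, 0, ?_⟩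
    rw [pow_succ, hx, one_mul] at hc
    simp [hc]
  | step m w e he hw' =>
    rcases hw'.right with rfl | ⟨m', v, f, hm, hv, hf, rfl⟩
    · refine ⟨w, e, ?_⟩
      rw [hxi, mul_assoc, mul_assoc, mul_assoc, hxx, mul_one, ← mul_assoc, hxx, one_mul]
    · have hE : x⁻¹ * (x * y ^ e * (v * y ^ f * x)) * x = y ^ e * v * y ^ f := by
        have : x⁻¹ * (x * y ^ e * (v * y ^ f * x)) * x = y ^ e * v * y ^ f * (x * x) := by group
        rw [this, hxx, mul_one]
      have h3 := pow_conj_one (h := x) hc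
      rw [hE] at h3
      obtain ⟨h, k, hk⟩ := ih m' (by omega) v hv e f h3
      refine ⟨x * h, k, ?_⟩
      rw [← hk, ← hE]; group

theorem abstract_key (T : Subsemigroup Q) (hT : ∀ t ∈ T, ∀ k : ℕ, 1 ≤ k → t ^ k ≠ 1)
    (hx : x ^ 2 = 1) (hy : y ^ 3 = 1) (hgen : Subgroup.closure {x, y} = ⊤)
    (h1 : x * y ∈ T) (h2 : x * y ^ 2 ∈ T) (a b c : Q) (ha : a ^ 3 = 1) (ha1 : a ≠ 1)
    (hp : ∀ k : ℕ, k < 3 → ∃ n, 1 ≤ n ∧ (((a ^ k)⁻¹ * b * a ^ k) * c) ^ n = 1) :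
    (∃ i : ℤ, b = a ^ i) ∨ ∃ i : ℤ, c = a ^ i := by
  have hconj : ∃ h, ∃ k : ℤ, h⁻¹ * a * h = y ^ k := by
    rcases normal_form hx hy hgen a with ⟨i, rfl⟩ | ⟨n, w, i, j, hw, rfl⟩
    · exact ⟨1, i, by simp⟩
    · exact sandwich_conj T hT hx hy h1 h2 n w hw i j ha
  obtain ⟨h, e, he⟩ := hconj
  have hae : a = h * y ^ e * h⁻¹ := by rw [← he]; group
  have hed : ¬ (3 : ℤ) ∣ e := by
    intro hd
    apply ha1
    rw [hae, zpow_of_dvd hy _ hd]; simp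
  have hpow : ∀ (g : Q) (i : ℤ), h⁻¹ * g * h = y ^ i → ∃ k : ℤ, g = a ^ k := by
    intro g i hg
    have hg' : g = h * y ^ i * h⁻¹ := by rw [← hg]; group
    refine ⟨e * i, ?_⟩
    rw [hg', hae, conj_zpow, ← zpow_mul]
    congr 2
    rw [zpow_mod_three hy i, zpow_mod_three hy (e * (e * i))]
    congr 1
    have : e % 3 = 1 ∨ e % 3 = 2 := by omega
    rcases this with h | h <;> rw [Int.mul_emod, Int.mul_emod e i, h] <;> omega
  rcases normal_form hx hy hgen (h⁻¹ * b * h) with ⟨i, hi⟩ | ⟨n, w, i, j, hw, hb⟩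
  · exact .inl (hpow _ _ hi)
  rcases normal_form hx hy hgen (h⁻¹ * c * h) with ⟨i', hi'⟩ | ⟨m, v, p, q, hv, hc⟩
  · exact .inr (hpow _ _ hi')
  exfalso
  have hb' : b = h * (y ^ i * w * y ^ j) * h⁻¹ := by rw [← hb]; group
  have hc' : c = h * (y ^ p * v * y ^ q) * h⁻¹ := by rw [← hc]; group
  have hk : ∃ k : ℕ, k < 3 ∧ ¬ (3 : ℤ) ∣ (j + e * k + p) ∧ ¬ (3 : ℤ) ∣ (q + (i - e * k)) := by
    by_contra hcon
    push Not at hcon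
    have k0 := hcon 0 (by norm_num)
    have k1 := hcon 1 (by norm_num)
    have k2 := hcon 2 (by norm_num)
    push_cast at k0 k1 k2
    omega
  obtain ⟨k, hk3, hk1, hk2⟩ := hk
  obtain ⟨N, hN, hN1⟩ := hp k hk3
  have hak : a ^ k = h * y ^ (e * k) * h⁻¹ := by
    rw [hae, conj_pow, zpow_mul, zpow_natCast]
  have := pow_conj_one (h := h * y ^ (i - e * k)) hN1
  refine hT _ (T.mul_mem (hw.mem T hy h1 h2 _ hk1) (hv.mem T hy h1 h2 _ hk2)) N hN ?_
  rw [← this]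
  congr 1
  rw [hak, hb', hc']
  group

end Abstract

section Braid
open Matrix

/-- The images of the generators in `SL(2, ℤ)`. -/
def slGen : Fin 2 → SpecialLinearGroup (Fin 2) ℤ :=
  ![⟨!![1, -1; 0, 1], by simp [Matrix.det_fin_two]⟩, ⟨!![1, 0; 1, 1], by simp [Matrix.det_fin_two]⟩]

theorem slGen_braid : slGen 0 * slGen 1 * slGen 0 = slGen 1 * slGen 0 * slGen 1 := by
  decide

/-- The homomorphism `B_3 → SL(2, ℤ)`. -/
def slHom : BraidGroup 3 →* SpecialLinearGroup (Fin 2) ℤ :=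
  PresentedGroup.toGroup (f := (slGen : Fin (3 - 1) → _)) (by
    rintro r (⟨i, j, h, rfl⟩ | ⟨i, j, h, rfl⟩)
    · exfalso
      have := i.isLt
      have := j.isLt
      omega
    · simp only [map_mul, map_inv, FreeGroup.lift_apply_of]
      rw [mul_inv_eq_one]
      have b := slGen_braid
      change Fin 2 at i
      change Fin 2 at j
      fin_cases i <;> fin_cases j <;> simp at h
      · exact b
      · exact b.symm)

/-- First generator. -/
def s1 : BraidGroup 3 := PresentedGroup.of (0 : Fin 2)
/-- Second generator. -/
def s2 : BraidGroup 3 := PresentedGroup.of (1 : Fin 2)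

theorem braid_rel : s1 * s2 * s1 = s2 * s1 * s2 := by
  have : PresentedGroup.mk (braidRels 3) (FreeGroup.of (0 : Fin 2) * FreeGroup.of (1 : Fin 2) *
      FreeGroup.of (0 : Fin 2) * (FreeGroup.of (1 : Fin 2) * FreeGroup.of (0 : Fin 2) *
      FreeGroup.of (1 : Fin 2))⁻¹) = 1 := by
    apply PresentedGroup.one_of_mem
    right
    exact ⟨(0 : Fin 2), (1 : Fin 2), by simp, rfl⟩
  rw [map_mul, map_inv, mul_inv_eq_one] at this
  simp only [map_mul] at this
  exact this

theorem closure_s : Subgroup.closure {s1, s2} = (⊤ : Subgroup (BraidGroup 3)) := by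
  rw [← PresentedGroup.closure_range_of]
  congr 1
  ext g
  constructor
  · rintro (rfl | rfl)
    · exact ⟨(0 : Fin 2), rfl⟩
    · exact ⟨(1 : Fin 2), rfl⟩
  · rintro ⟨i, rfl⟩
    change Fin 2 at i
    fin_cases i
    · left; rfl
    · right; rfl

theorem slHom_s1 : (slHom s1 : Matrix (Fin 2) (Fin 2) ℤ) = !![1, -1; 0, 1] := by
  have : slHom s1 = slGen 0 := PresentedGroup.toGroup.of _
  rw [this]; rfl

theorem slHom_s2 : (slHom s2 : Matrix (Fin 2) (Fin 2) ℤ) = !![1, 0; 1, 1] := by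
  have : slHom s2 = slGen 1 := PresentedGroup.toGroup.of _
  rw [this]; rfl

/-- Positive braids, as seen in `SL(2, ℤ)`. -/
def posSemi : Subsemigroup (BraidGroup 3) where
  carrier := {g | 1 ≤ (slHom g).1 0 0 ∧ 1 ≤ (slHom g).1 1 1 ∧ 0 ≤ (slHom g).1 0 1 ∧
    0 ≤ (slHom g).1 1 0 ∧ 1 ≤ (slHom g).1 0 1 + (slHom g).1 1 0}
  mul_mem' := by
    rintro g h ⟨a1, a2, a3, a4, a5⟩ ⟨b1, b2, b3, b4, b5⟩
    have hm : (slHom (g * h)).1 = (slHom g).1 * (slHom h).1 := by rw [map_mul]; rfl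
    change _ ∧ _
    rw [hm]
    simp only [Matrix.mul_apply, Fin.sum_univ_two]
    refine ⟨?_, ?_, ?_, ?_, ?_⟩ <;> nlinarith [mul_nonneg a3 b4, mul_nonneg a4 b3]

theorem posSemi_not_central {g : BraidGroup 3} (hg : g ∈ posSemi) :
    g ∉ Subgroup.center (BraidGroup 3) := by
  intro hc
  obtain ⟨a1, a2, a3, a4, a5⟩ := hg
  rw [Subgroup.mem_center_iff] at hc
  have hm : ∀ u v : BraidGroup 3, (slHom (u * v)).1 = (slHom u).1 * (slHom v).1 := by
    intro u v; rw [map_mul]; rfl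
  have c1 : (slHom (s1 * g)).1 = (slHom (g * s1)).1 := by rw [hc s1]
  have c2 : (slHom (s2 * g)).1 = (slHom (g * s2)).1 := by rw [hc s2]
  rw [hm, hm, slHom_s1] at c1
  rw [hm, hm, slHom_s2] at c2
  have d1 := congrFun (congrFun c1 0) 0
  have d2 := congrFun (congrFun c2 0) 0
  simp [Matrix.mul_apply, Fin.sum_univ_two] at d1 d2
  omega

theorem subsemi_pow {G : Type*} [Group G] (T : Subsemigroup G) {t : G} (ht : t ∈ T) (k : ℕ)
    (hk : 1 ≤ k) : t ^ k ∈ T := by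
  induction k, hk using Nat.le_induction with
  | base => simpa using ht
  | succ n hn ih => rw [pow_succ]; exact T.mul_mem ih ht

theorem central_of_comm {z : BraidGroup 3} (h1 : s1 * z = z * s1) (h2 : s2 * z = z * s2) :
    z ∈ Subgroup.center (BraidGroup 3) := by
  have : Subgroup.closure {s1, s2} ≤ Subgroup.centralizer {z} := by
    rw [Subgroup.closure_le]
    rintro g (rfl | rfl)
    · exact Subgroup.mem_centralizer_singleton_iff.2 h1
    · exact Subgroup.mem_centralizer_singleton_iff.2 h2
  rw [closure_s] at this
  rw [Subgroup.mem_center_iff]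
  intro g
  exact Subgroup.mem_centralizer_singleton_iff.1 (this (Subgroup.mem_top g))

theorem full_twist_central : (s1 * s2) ^ 3 ∈ Subgroup.center (BraidGroup 3) := by
  have r := braid_rel
  have e1 : s1 * (s1 * s2 * s1) = (s1 * s2 * s1) * s2 := by
    nth_rewrite 1 [r]
    simp only [mul_assoc]
  have e2 : s2 * (s1 * s2 * s1) = (s1 * s2 * s1) * s1 := by
    nth_rewrite 2 [r]
    simp only [mul_assoc]
  have hz : (s1 * s2) ^ 3 = (s1 * s2 * s1) * (s1 * s2 * s1) := by
    nth_rewrite 2 [r]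
    simp only [pow_succ, pow_zero, one_mul, mul_assoc]
  rw [hz]
  apply central_of_comm
  · rw [← mul_assoc, e1, mul_assoc (s1 * s2 * s1), e2]; simp only [mul_assoc]
  · rw [← mul_assoc, e2, mul_assoc (s1 * s2 * s1), e1]; simp only [mul_assoc]

end Braid

/-- If `α ∈ B_3` is periodic of period 3 (`α^3` central, `α` not central)
and all of `βγ`, `(α⁻¹βα)γ`, `(α⁻²βα²)γ` are periodic, then `β` or `γ` commutes with `α`. -/
theorem key_lemma_period_three (α β γ : BraidGroup 3)
    (h3 : α ^ 3 ∈ Subgroup.center (BraidGroup 3))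
    (h1 : α ∉ Subgroup.center (BraidGroup 3))
    (hp1 : IsPeriodic (β * γ))
    (hp2 : IsPeriodic ((α⁻¹ * β * α) * γ))
    (hp3 : IsPeriodic (((α ^ 2)⁻¹ * β * α ^ 2) * γ)) :
    Commute β α ∨ Commute γ α := by
  let Z := Subgroup.center (BraidGroup 3)
  let π : BraidGroup 3 →* BraidGroup 3 ⧸ Z := QuotientGroup.mk' Z
  have hπ : ∀ g, π g = 1 ↔ g ∈ Z := fun g => QuotientGroup.eq_one_iff g
  have hsurj : Function.Surjective π := QuotientGroup.mk'_surjective Z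
  have hz := full_twist_central
  have r := braid_rel
  have hzx : (s1 * s2 * s1) ^ 2 = (s1 * s2) ^ 3 := by
    rw [pow_two]
    nth_rewrite 2 [r]
    simp only [pow_succ, pow_zero, one_mul, mul_assoc]
  have hfin : ∀ g : BraidGroup 3, (∃ i : ℤ, π g = π α ^ i) → Commute g α := by
    rintro g ⟨i, hi⟩
    have hc : (α ^ i)⁻¹ * g ∈ Z := by
      rw [← hπ, map_mul, map_inv, map_zpow, hi, inv_mul_cancel]
    have hg : g = α ^ i * ((α ^ i)⁻¹ * g) := by group
    rw [hg]
    apply Commute.mul_left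
    · exact (Commute.refl α).zpow_left i
    · exact (Subgroup.mem_center_iff.1 hc α).symm
  have hgen : Subgroup.closure {π (s1 * s2 * s1), π (s1 * s2)} = ⊤ := by
    have : Subgroup.closure {s1 * s2 * s1, s1 * s2} = ⊤ := by
      rw [eq_top_iff, ← closure_s, Subgroup.closure_le]
      have m1 : s1 * s2 * s1 ∈ Subgroup.closure {s1 * s2 * s1, s1 * s2} :=
        Subgroup.subset_closure (by simp)
      have m2 : s1 * s2 ∈ Subgroup.closure {s1 * s2 * s1, s1 * s2} :=
        Subgroup.subset_closure (by simp)
      have m3 : s1 ∈ Subgroup.closure {s1 * s2 * s1, s1 * s2} := by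
        have := Subgroup.mul_mem _ (Subgroup.inv_mem _ m2) m1
        rwa [inv_mul_cancel_left] at this
      rintro g (rfl | rfl)
      · exact m3
      · have := Subgroup.mul_mem _ (Subgroup.inv_mem _ m3) m2
        rwa [inv_mul_cancel_left] at this
    have h := congrArg (Subgroup.map π) this
    rw [MonoidHom.map_closure, Set.image_pair, Subgroup.map_top_of_surjective _ hsurj] at h
    exact h
  have hE1 : s1 * s2 * s1 * (s1 * s2) = (s1 * s2) ^ 3 * s1⁻¹ := by
    rw [← hzx]; simp [pow_two, mul_assoc]
  have hE2 : s1 * s2 * s1 * (s1 * s2) ^ 2 = (s1 * s2) ^ 3 * s2 := by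
    rw [← hzx]; simp [pow_two, mul_assoc]
  have key := abstract_key (x := π (s1 * s2 * s1)) (y := π (s1 * s2)) (posSemi.map π.toMulHom)
    (by
      rintro t ⟨g, hg, rfl⟩ k hk ht
      change (π g) ^ k = 1 at ht
      rw [← map_pow, hπ] at ht
      exact posSemi_not_central (subsemi_pow _ hg k hk) ht)
    (by rw [← map_pow, hπ, hzx]; exact hz)
    (by rw [← map_pow, hπ]; exact hz)
    hgen
    (by
      refine ⟨s1⁻¹, ?_, ?_⟩
      · change _ ∧ _
        simp [slHom_s1, Matrix.adjugate_fin_two, Matrix.SpecialLinearGroup.coe_inv]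
      · change π _ = _
        rw [← map_mul, hE1, map_mul, (hπ _).2 hz, one_mul])
    (by
      refine ⟨s2, ?_, ?_⟩
      · change _ ∧ _
        simp [slHom_s2]
      · change π _ = _
        rw [← map_pow, ← map_mul, hE2, map_mul, (hπ _).2 hz, one_mul])
    (π α) (π β) (π γ) (by rw [← map_pow, hπ]; exact h3) (fun h => h1 ((hπ _).1 h))
    (by
      have hP : ∀ k : ℕ, IsPeriodic (((α ^ k)⁻¹ * β * α ^ k) * γ) →
          ∃ n, 1 ≤ n ∧ (((π α ^ k)⁻¹ * π β * π α ^ k) * π γ) ^ n = 1 := by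
        rintro k ⟨n, hn, h⟩
        refine ⟨n, hn, ?_⟩
        rw [← hπ] at h
        simpa only [map_pow, map_mul, map_inv] using h
      intro k hk
      apply hP
      interval_cases k
      · simpa using hp1
      · simpa using hp2
      · exact hp3)
  rcases key with h | h
  · exact .inl (hfin _ h)
  · exact .inr (hfin _ h)
end

section
/- Let s = (β_1, β_2, β_3) ∈ B_3^3 be an irreducible braid system whose Hurwitz orbit s·B_3 is finite, and suppose s is (2,2)-periodic, i.e. e(β_1) ≡ ±2 (mod 6) and e(β_2) ≡ ±1 (mod 6) and e(β_3) ≡ ±1 (mod 6). Then s·(c_1c_2)^3 = s. -/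
namespace P22

abbrev B := BraidGroup 3

def s1 : B := PresentedGroup.of ⟨0, by decide⟩
def s2 : B := PresentedGroup.of ⟨1, by decide⟩

lemma braid_rel : s1 * s2 * s1 = s2 * s1 * s2 := by
  have h : (PresentedGroup.mk (braidRels 3)) (FreeGroup.of ⟨0, by decide⟩ * FreeGroup.of ⟨1, by decide⟩ *
      FreeGroup.of ⟨0, by decide⟩ * (FreeGroup.of ⟨1, by decide⟩ * FreeGroup.of ⟨0, by decide⟩ *
      FreeGroup.of ⟨1, by decide⟩)⁻¹) = 1 := by
    apply PresentedGroup.one_of_mem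
    right
    exact ⟨_, _, Or.inl rfl, rfl⟩
  rw [map_mul, map_inv, mul_inv_eq_one] at h
  exact h

def x : B := s1 * s2 * s1
def y : B := s1 * s2
def z : B := x * x

lemma y_s1 : y * s1 = x := rfl
lemma y_s2 : y * s2⁻¹ = s1 := by simp [y]
lemma x_s1 : x * s1 = s2 * x := by
  simp only [x]
  calc s1 * s2 * s1 * s1 = (s1 * s2 * s1) * s1 := rfl
    _ = _ := by rw [braid_rel]; simp only [mul_assoc]; rw [← mul_assoc s1 s2 s1, braid_rel]; simp only [mul_assoc]
lemma x_s2 : x * s2 = s1 * x := by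
  have h : x = s2 * s1 * s2 := braid_rel
  calc x * s2 = s1 * s2 * s1 * s2 := rfl
    _ = s1 * (s2 * s1 * s2) := by simp only [mul_assoc]
    _ = _ := by rw [← h]
lemma z_s1 : z * s1 = s1 * z := by
  simp only [z]; rw [mul_assoc, x_s1, ← mul_assoc, x_s2, mul_assoc]
lemma z_s2 : z * s2 = s2 * z := by
  simp only [z]; rw [mul_assoc, x_s2, ← mul_assoc, x_s1, mul_assoc]

lemma gen_cases (P : B → Prop) (h1 : P s1) (h2 : P s2) (i : Fin (3 - 1)) :
    P (PresentedGroup.of i) := by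
  rcases i with ⟨i, hi⟩
  have : i = 0 ∨ i = 1 := by omega
  rcases this with rfl | rfl
  · exact h1
  · exact h2

lemma B_induction (P : B → Prop) (h1 : P 1) (ha : P s1) (hb : P s2)
    (hinv : ∀ g, P g → P g⁻¹) (hmul : ∀ g h, P g → P h → P (g * h)) (g : B) : P g := by
  obtain ⟨w, rfl⟩ := PresentedGroup.mk_surjective _ g
  induction w using FreeGroup.induction_on with
  | C1 => simpa using h1
  | of i => exact gen_cases P ha hb i
  | inv_of i h => rw [map_inv]; exact hinv _ h
  | mul a b h h' => rw [map_mul]; exact hmul _ _ h h'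

lemma z_comm (g : B) : Commute z g := by
  induction g using B_induction with
  | h1 => exact Commute.one_right _
  | ha => exact z_s1
  | hb => exact z_s2
  | hinv g h => exact h.inv_right
  | hmul g h h1 h2 => exact h1.mul_right h2

lemma zp_comm (k : ℤ) (g : B) : Commute (z ^ k) g := (z_comm g).zpow_left k

lemma yyy : y * y * y = z := by
  calc y * y * y = (s1 * s2 * s1) * (s2 * s1 * s2) := by simp only [y, mul_assoc]
    _ = z := by rw [← braid_rel]; rfl

lemma y_x : y * x = z * s2⁻¹ := by
  rw [eq_mul_inv_iff_mul_eq, mul_assoc, x_s2, ← mul_assoc]; rfl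

def W (l : List Bool) : B := (l.map (fun b => if b then s1 else s2⁻¹)).prod

def NF (g : B) : Prop := ∃ (k : ℤ) (p : B) (l : List Bool) (q : B),
  (p = 1 ∨ p = x) ∧ (q = 1 ∨ q = y ∨ q = y⁻¹) ∧ g = z ^ k * (p * W l * q)

lemma NF_z (m : ℤ) {g : B} (h : NF g) : NF (z ^ m * g) := by
  obtain ⟨k, p, l, q, hp, hq, rfl⟩ := h
  exact ⟨m + k, p, l, q, hp, hq, by rw [zpow_add]; simp only [mul_assoc]⟩

lemma NF_x {g : B} (h : NF g) : NF (x * g) := by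
  obtain ⟨k, p, l, q, hp, hq, rfl⟩ := h
  rw [← mul_assoc, ← (zp_comm k x).eq, mul_assoc]
  apply NF_z
  rcases hp with rfl | rfl
  · exact ⟨0, x, l, q, Or.inr rfl, hq, by simp [mul_assoc]⟩
  · exact ⟨1, 1, l, q, Or.inl rfl, hq, by simp [z, mul_assoc]⟩

lemma NF_y {g : B} (h : NF g) : NF (y * g) := by
  obtain ⟨k, p, l, q, hp, hq, rfl⟩ := h
  rw [← mul_assoc, ← (zp_comm k y).eq, mul_assoc]
  apply NF_z
  rcases hp with rfl | rfl
  · rcases l with _ | ⟨b, l⟩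
    · rcases hq with rfl | rfl | rfl
      · exact ⟨0, 1, [], y, by simp, by simp, by simp [W]⟩
      · exact ⟨1, 1, [], y⁻¹, by simp, by simp, by simp [W, ← yyy]⟩
      · exact ⟨0, 1, [], 1, by simp, by simp, by simp [W]⟩
    · cases b
      · refine ⟨0, 1, true :: l, q, by simp, hq, ?_⟩
        simp only [W, List.map_cons, List.prod_cons, zpow_zero, one_mul, ← mul_assoc]
        simp [y_s2]
      · refine ⟨0, x, l, q, by simp, hq, ?_⟩
        simp only [W, List.map_cons, List.prod_cons, zpow_zero, one_mul, ← mul_assoc]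
        simp [y_s1]
  · refine ⟨1, 1, false :: l, q, by simp, hq, ?_⟩
    simp only [W, List.map_cons, List.prod_cons, zpow_one, one_mul, ← mul_assoc, y_x]
    simp

lemma NF_xi {g : B} (h : NF g) : NF (x⁻¹ * g) := by
  have : x⁻¹ * g = z ^ (-1 : ℤ) * (x * g) := by simp [z, mul_assoc]
  rw [this]; exact NF_z _ (NF_x h)

lemma NF_yi {g : B} (h : NF g) : NF (y⁻¹ * g) := by
  have : y⁻¹ * g = z ^ (-1 : ℤ) * (y * (y * g)) := by simp [← yyy, mul_assoc]
  rw [this]; exact NF_z _ (NF_y (NF_y h))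

lemma NF_all (g : B) : NF g := by
  have key : ∀ g : B, (∀ h, NF h → NF (g * h)) ∧ (∀ h, NF h → NF (g⁻¹ * h)) := by
    intro g
    induction g using B_induction with
    | h1 => simp
    | ha =>
      have e : s1 = y⁻¹ * x := by rw [← y_s1]; simp
      rw [e]
      constructor
      · intro h hh; rw [mul_assoc]; exact NF_yi (NF_x hh)
      · intro h hh; rw [mul_inv_rev, inv_inv, mul_assoc]; exact NF_xi (NF_y hh)
    | hb =>
      have e : s2 = x⁻¹ * (y * y) := by simp [x, y, mul_assoc]
      rw [e]
      constructor
      · intro h hh; simp only [mul_assoc]; exact NF_xi (NF_y (NF_y hh))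
      · intro h hh; simp only [mul_assoc, mul_inv_rev, inv_inv]; exact NF_yi (NF_yi (NF_x hh))
    | hinv g h => exact ⟨h.2, by simpa using h.1⟩
    | hmul g h h1 h2 =>
      constructor
      · intro k hk; rw [mul_assoc]; exact h1.1 _ (h2.1 _ hk)
      · intro k hk; rw [mul_inv_rev, mul_assoc]; exact h2.2 _ (h1.2 _ hk)
  have := (key g).1 1 ⟨0, 1, [], 1, by simp, by simp, by simp [W]⟩
  simpa using this

/-! The matrix representation. -/

abbrev SL := Matrix.SpecialLinearGroup (Fin 2) ℤ

lemma val_one : (1 : SL).1 = 1 := rfl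
lemma val_neg (A : SL) : (-A).1 = -A.1 := rfl
lemma val_pow (A : SL) (n : ℕ) : (A ^ n).1 = A.1 ^ n := rfl
lemma val_mul (A C : SL) : (A * C).1 = A.1 * C.1 := rfl

def m1 : SL := ⟨!![1, 1; 0, 1], by simp [Matrix.det_fin_two]⟩
def m2 : SL := ⟨!![1, 0; -1, 1], by simp [Matrix.det_fin_two]⟩

def m2i : SL := ⟨!![1, 0; 1, 1], by simp [Matrix.det_fin_two]⟩
lemma m2_inv : m2⁻¹ = m2i := inv_eq_of_mul_eq_one_right (by decide)
lemma m1_val : m1.1 = !![1, 1; 0, 1] := rfl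
lemma m2i_val : m2i.1 = !![1, 0; 1, 1] := rfl

lemma m_rel : m1 * m2 * m1 = m2 * m1 * m2 := by decide

def rho : B →* SL :=
  PresentedGroup.toGroup (f := fun i : Fin (3 - 1) => if i.val = 0 then m1 else m2) (by
    rintro r (⟨i, j, hij, rfl⟩ | ⟨i, j, hij, rfl⟩)
    · have := i.isLt; have := j.isLt; omega
    · rw [map_mul, map_inv, mul_inv_eq_one]
      simp only [map_mul, FreeGroup.lift_apply_of]
      have := i.isLt; have := j.isLt
      rcases hij with h | h
      · have h1 : i.val = 0 := by omega
        have h2 : j.val ≠ 0 := by omega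
        simp only [h1, h2, if_true, if_false]; exact m_rel
      · have h1 : j.val = 0 := by omega
        have h2 : i.val ≠ 0 := by omega
        simp only [h1, h2, if_true, if_false]; exact m_rel.symm)

lemma rho_s1 : rho s1 = m1 := by simp [rho, s1]
lemma rho_s2 : rho s2 = m2 := by simp [rho, s2]
lemma rho_x : rho x = m1 * m2 * m1 := by simp [x, rho_s1, rho_s2]
lemma rho_y : rho y = m1 * m2 := by simp [y, rho_s1, rho_s2]
lemma rho_z : rho z = -1 := by simp only [z, map_mul, rho_x]; decide

/-- nonnegative entries, and either the identity word or total at least three. -/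
lemma W_nonneg (l : List Bool) :
    1 ≤ (rho (W l)).1 0 0 ∧ 0 ≤ (rho (W l)).1 0 1 ∧ 0 ≤ (rho (W l)).1 1 0 ∧ 1 ≤ (rho (W l)).1 1 1 ∧
      (l ≠ [] → 1 ≤ (rho (W l)).1 0 1 + (rho (W l)).1 1 0) := by
  induction l with
  | nil => simp [W]
  | cons b l ih =>
    obtain ⟨h1, h2, h3, h4, -⟩ := ih
    have e : W (b :: l) = (if b then s1 else s2⁻¹) * W l := by simp [W]
    rw [e, map_mul]
    cases b
    · simp [rho_s2, m2_inv, val_mul, m2i_val, Matrix.mul_apply, Fin.sum_univ_two]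
      omega
    · simp [rho_s1, m1_val, val_mul, Matrix.mul_apply, Fin.sum_univ_two]
      omega

lemma ker_rho (g : B) (h : rho g = 1 ∨ rho g = -1) : ∃ k : ℤ, g = z ^ k := by
  obtain ⟨k, p, l, q, hp, hq, rfl⟩ := NF_all g
  have hz : rho (z ^ k) = 1 ∨ rho (z ^ k) = -1 := by
    rw [map_zpow, rho_z]
    rcases Int.even_or_odd k with h | h
    · left; exact h.neg_one_zpow
    · right
      obtain ⟨m, rfl⟩ := h
      rw [zpow_add, zpow_mul]
      have : (-1 : SL) ^ (2 : ℤ) = 1 := by decide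
      rw [this]; simp
  have h' : rho (p * W l * q) = 1 ∨ rho (p * W l * q) = -1 := by
    rw [map_mul] at h
    rcases hz with hz | hz <;> rw [hz] at h <;> rcases h with h | h
    · left; simpa using h
    · right; simpa using h
    · right; rw [← h]; simp
    · left; simpa using h
  have h'' : rho (W l) = (rho p)⁻¹ * (rho q)⁻¹ ∨ rho (W l) = - ((rho p)⁻¹ * (rho q)⁻¹) := by
    simp only [map_mul] at h'
    rcases h' with h | h
    · left
      rw [mul_eq_one_iff_eq_inv] at h
      rw [← h]; simp
    · right
      have : rho (W l) = (rho p)⁻¹ * (rho p * rho (W l) * rho q) * (rho q)⁻¹ := by group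
      rw [this, h]; simp
  obtain ⟨a1, a2, a3, a4, a5⟩ := W_nonneg l
  have main : p = 1 ∧ q = 1 ∧ l = [] := by
    have f (M : SL) (hM : rho (W l) = M) : 1 ≤ M.1 0 0 ∧ 0 ≤ M.1 0 1 ∧ 0 ≤ M.1 1 0 ∧ 1 ≤ M.1 1 1 := by
      subst hM; exact ⟨a1, a2, a3, a4⟩
    rcases hp with rfl | rfl <;> rcases hq with rfl | rfl | rfl <;>
      simp only [map_one, map_inv, rho_x, rho_y] at h''
    · refine ⟨rfl, rfl, ?_⟩
      by_contra hl
      have a5 := a5 hl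
      rcases h'' with h | h <;> rw [h] at a5 <;> revert a5 <;> decide
    all_goals
      exfalso
      rcases h'' with h | h <;> have := f _ h <;> revert this <;> decide
  obtain ⟨rfl, rfl, rfl⟩ := main
  exact ⟨k, by simp [W]⟩

lemma esum_mul (a b : B) : esum (a * b) = esum a + esum b := by simp [esum]
lemma esum_inv (a : B) : esum a⁻¹ = - esum a := by simp [esum]
lemma esum_zpow (a : B) (k : ℤ) : esum (a ^ k) = k * esum a := by simp [esum]
lemma esum_s1 : esum s1 = 1 := by simp [esum, expSumHom, s1]
lemma esum_s2 : esum s2 = 1 := by simp [esum, expSumHom, s2]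
lemma esum_z : esum z = 6 := by simp [z, x, esum_mul, esum_s1, esum_s2]

lemma commute_of_rho (a b : B) (h : rho a * rho b = rho b * rho a) : Commute a b := by
  obtain ⟨k, hk⟩ := ker_rho (a * b * (b * a)⁻¹) (by left; simp only [map_mul, map_inv, h]; simp)
  have he := congrArg esum hk
  rw [esum_zpow, esum_z] at he
  simp only [esum_mul, esum_inv] at he
  have : k = 0 := by omega
  rw [this, zpow_zero, mul_inv_eq_one] at hk
  exact hk

/-- Commutation is transitive through non-scalar matrices. -/
lemma SL_trans (M A C : SL) (hM : ¬ (M = 1 ∨ M = -1)) (hA : M * A = A * M) (hC : M * C = C * M) :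
    A * C = C * A := by
  have dM := M.2
  rw [Matrix.det_fin_two] at dM
  have hA' := congrArg Subtype.val hA
  have hC' := congrArg Subtype.val hC
  have hM' : ¬ (M.1 0 1 = 0 ∧ M.1 1 0 = 0 ∧ M.1 0 0 = M.1 1 1) := by
    rintro ⟨h1, h2, h3⟩
    apply hM
    rw [h1, h3] at dM
    have : M.1 1 1 = 1 ∨ M.1 1 1 = -1 := by
      have : (M.1 1 1 - 1) * (M.1 1 1 + 1) = 0 := by linarith
      rcases mul_eq_zero.mp this with h | h
      · left; linarith
      · right; linarith
    rcases this with h | h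
    · left; apply Subtype.ext; ext i j; fin_cases i <;> fin_cases j <;> simp [val_neg, val_one, h1, h2, h3, h]
    · right; apply Subtype.ext; ext i j; fin_cases i <;> fin_cases j <;> simp [val_neg, val_one, h1, h2, h3, h]
  simp only [val_mul, ← Matrix.ext_iff, Fin.forall_fin_two,
    Matrix.mul_apply, Fin.sum_univ_two] at hA' hC'
  apply Subtype.ext
  simp only [val_mul, ← Matrix.ext_iff, Fin.forall_fin_two,
    Matrix.mul_apply, Fin.sum_univ_two]
  generalize M.1 0 0 = m0 at *
  generalize M.1 0 1 = m1 at *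
  generalize M.1 1 0 = m2 at *
  generalize M.1 1 1 = m3 at *
  generalize A.1 0 0 = a0 at *
  generalize A.1 0 1 = a1 at *
  generalize A.1 1 0 = a2 at *
  generalize A.1 1 1 = a3 at *
  generalize C.1 0 0 = c0 at *
  generalize C.1 0 1 = c1 at *
  generalize C.1 1 0 = c2 at *
  generalize C.1 1 1 = c3 at *
  obtain ⟨⟨p1, p2⟩, p3, p4⟩ := hA'
  obtain ⟨⟨q1, q2⟩, q3, q4⟩ := hC'
  by_cases k1 : m1 = 0
  · by_cases k2 : m2 = 0
    · have k3 : m0 - m3 ≠ 0 := fun h => hM' ⟨k1, k2, by linarith⟩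
      refine ⟨⟨?_, ?_⟩, ?_, ?_⟩ <;> apply mul_left_cancel₀ k3 <;> subst k1 <;> subst k2 <;> grind
    · refine ⟨⟨?_, ?_⟩, ?_, ?_⟩ <;> apply mul_left_cancel₀ k2 <;> grind
  · refine ⟨⟨?_, ?_⟩, ?_, ?_⟩ <;> apply mul_left_cancel₀ k1 <;> grind

def u (t : ℤ) : ℕ → ℤ
  | 0 => 0
  | 1 => 1
  | n + 2 => t * u t (n + 1) - u t n

lemma u_grow (t : ℤ) (ht : 2 ≤ |t|) (n : ℕ) : |u t n| < |u t (n + 1)| := by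
  induction n with
  | zero => simp [u]
  | succ n ih =>
    have h : |t * u t (n + 1)| ≤ |u t (n + 2)| + |u t n| := by
      have : t * u t (n + 1) = u t (n + 2) + u t n := by simp [u]
      rw [this]; exact abs_add_le _ _
    rw [abs_mul] at h
    have h2 := abs_nonneg (u t (n + 1))
    show |u t (n + 1)| < |u t (n + 2)|
    nlinarith

lemma u_pow (A : Matrix (Fin 2) (Fin 2) ℤ) (hd : A.det = 1) (n : ℕ) :
    A ^ (n + 1) = u A.trace (n + 1) • A - u A.trace n • (1 : Matrix (Fin 2) (Fin 2) ℤ) := by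
  have ch : A * A = A.trace • A - (1 : Matrix (Fin 2) (Fin 2) ℤ) := by
    rw [Matrix.det_fin_two] at hd
    rw [Matrix.trace_fin_two]
    ext i j
    fin_cases i <;> fin_cases j <;>
      simp [Matrix.mul_apply, Fin.sum_univ_two, -zsmul_eq_mul, -smul_eq_mul, Matrix.sub_apply, Matrix.smul_apply] <;> grind
  induction n with
  | zero => simp [u]
  | succ n ih =>
    rw [pow_succ, ih, sub_mul, smul_mul_assoc, smul_mul_assoc, one_mul, ch, u]
    module

lemma SL_torsion (M : SL) (k : ℕ) (hk : 1 ≤ k) (h : M ^ k = 1 ∨ M ^ k = -1) :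
    M ^ 2 = -1 ∨ M ^ 3 = 1 ∨ M ^ 3 = -1 := by
  obtain ⟨n, rfl⟩ : ∃ n, k = n + 1 := ⟨k - 1, by omega⟩
  have hd := M.2
  obtain ⟨A, hA⟩ : ∃ A, A = M.1 := ⟨_, rfl⟩
  rw [← hA] at hd
  have hp := u_pow A hd
  by_cases ht : 2 ≤ |A.trace|
  · have hu : u A.trace (n + 1) ≠ 0 := by
      have := u_grow _ ht n
      have h2 := abs_nonneg (u A.trace n)
      intro h0
      rw [h0, abs_zero] at this
      omega
    have hs : ∃ c : ℤ, A ^ (n + 1) = c • (1 : Matrix (Fin 2) (Fin 2) ℤ) := by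
      rcases h with h | h
      · exact ⟨1, by rw [hA, ← val_pow, h, val_one, one_smul]⟩
      · exact ⟨-1, by rw [hA, ← val_pow, h, val_neg, val_one, neg_smul, one_smul]⟩
    obtain ⟨c, hc⟩ := hs
    rw [hp n] at hc
    have e01 := congrFun (congrFun hc 0) 1
    have e10 := congrFun (congrFun hc 1) 0
    have e00 := congrFun (congrFun hc 0) 0
    have e11 := congrFun (congrFun hc 1) 1
    simp [hu, -zsmul_eq_mul, -zsmul_one, Matrix.sub_apply, Matrix.smul_apply] at e01 e10 e00 e11
    have e : A 0 0 = A 1 1 := by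
      apply mul_left_cancel₀ hu; linarith
    rw [Matrix.det_fin_two, e01, e] at hd
    have : A 1 1 = 1 ∨ A 1 1 = -1 := by
      have : (A 1 1 - 1) * (A 1 1 + 1) = 0 := by linarith
      rcases mul_eq_zero.mp this with h | h
      · left; linarith
      · right; linarith
    rcases this with h1 | h1
    · right; left
      have : A = 1 := by
        ext i j; fin_cases i <;> fin_cases j <;> simp [e01, e10, e, h1]
      apply Subtype.ext; rw [val_pow, ← hA, this]; simp [val_one]
    · right; right
      have : A = -1 := by
        ext i j; fin_cases i <;> fin_cases j <;> simp [e01, e10, e, h1]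
      apply Subtype.ext; rw [val_pow, ← hA, this]; simp [val_neg, val_one, Odd.neg_one_pow (by decide : Odd 3)]
  · have h1 := hp 1
    have h2 := hp 2
    have : A.trace = 0 ∨ A.trace = 1 ∨ A.trace = -1 := by
      rw [not_le, abs_lt] at ht; omega
    rcases this with h | h | h <;> rw [h] at h1 h2 <;> norm_num [u] at h1 h2
    · left; apply Subtype.ext; rw [val_pow, ← hA, h1]; rfl
    · right; right; apply Subtype.ext; rw [val_pow, ← hA, h2]; rfl
    · right; left; apply Subtype.ext; rw [val_pow, ← hA, h2]; rfl

lemma key (X : B) (he : Even (esum X)) (k : ℕ) (hk : 1 ≤ k) (a b : B)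
    (ha : Commute (X ^ k) a) (hb : Commute (X ^ k) b) :
    Commute a b ∨ ∀ g, Commute (X ^ 3) g := by
  by_cases hs : rho X ^ k = 1 ∨ rho X ^ k = -1
  · right
    have cube (h : rho X ^ 3 = 1 ∨ rho X ^ 3 = -1) : ∀ g, Commute (X ^ 3) g := by
      obtain ⟨m, hm⟩ := ker_rho (X ^ 3) (by rwa [map_pow])
      rw [hm]; exact zp_comm m
    rcases SL_torsion _ k hk hs with h | h
    · exfalso
      obtain ⟨m, hm⟩ := ker_rho (X ^ 2) (by right; rwa [map_pow])
      have e1 := congrArg esum hm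
      rw [sq, esum_mul, esum_zpow, esum_z] at e1
      obtain ⟨r, hr⟩ := he
      obtain ⟨q, rfl⟩ : ∃ q, m = 2 * q := ⟨m / 2, by omega⟩
      have e2 := congrArg rho hm
      rw [map_pow, h, map_zpow, rho_z, zpow_mul] at e2
      have : (-1 : SL) ^ (2 : ℤ) = 1 := by decide
      rw [this, one_zpow] at e2
      revert e2; decide
    · exact cube h
  · left
    apply commute_of_rho
    apply SL_trans (rho X ^ k) _ _ hs
    · simpa using congrArg rho ha.eq
    · simpa using congrArg rho hb.eq

/-! The Hurwitz action. -/

lemma act_mul {G : Type*} [Group G] {n : ℕ} (w v : FreeGroup (Fin (n - 1))) (s : Fin n → G) :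
    hurwitzAct (w * v) s = hurwitzAct v (hurwitzAct w s) := by
  simp [hurwitzAct]

lemma act_one {G : Type*} [Group G] {n : ℕ} (s : Fin n → G) :
    hurwitzAct (1 : FreeGroup (Fin (n - 1))) s = s := by
  simp [hurwitzAct]

lemma act_inj {G : Type*} [Group G] {n : ℕ} (w : FreeGroup (Fin (n - 1))) :
    Function.Injective (hurwitzAct (G := G) w) := Equiv.injective _

lemma act_g1 {G : Type*} [Group G] (a b c : G) :
    hurwitzAct (genWord 3 1) ![a, b, c] = ![b, b⁻¹ * a * b, c] := by
  funext i
  fin_cases i <;> simp [hurwitzAct, genWord, hEquiv]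

lemma act_g2 {G : Type*} [Group G] (a b c : G) :
    hurwitzAct (genWord 3 2) ![a, b, c] = ![a, c, c⁻¹ * b * c] := by
  funext i
  fin_cases i <;> simp [hurwitzAct, genWord, hEquiv]

lemma period {G : Type*} [Group G] {n : ℕ} (s : Fin n → G) (hfin : (hurwitzOrbit s).Finite)
    (w : FreeGroup (Fin (n - 1))) : ∃ k : ℕ, 1 ≤ k ∧ hurwitzAct (w ^ k) s = s := by
  have : ¬ Function.Injective (fun k : ℕ => hurwitzAct (w ^ k) s) := by
    intro hinj
    apply Set.infinite_range_of_injective hinj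
    apply hfin.subset
    rintro _ ⟨k, rfl⟩
    exact ⟨_, rfl⟩
  have aux : ∀ i j : ℕ, i < j → hurwitzAct (w ^ i) s = hurwitzAct (w ^ j) s →
      ∃ k : ℕ, 1 ≤ k ∧ hurwitzAct (w ^ k) s = s := by
    intro i j hij h
    refine ⟨j - i, by omega, ?_⟩
    apply act_inj (w ^ i)
    rw [← act_mul, ← pow_add, h]
    congr 2; omega
  simp only [Function.Injective, not_forall] at this
  obtain ⟨i, j, h, hne⟩ := this
  rcases lt_or_gt_of_ne hne with hl | hl
  · exact aux i j hl h
  · exact aux j i hl h.symm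

lemma act_sq_pow {G : Type*} [Group G] (a b c : G) (n : ℕ) :
    hurwitzAct ((genWord 3 2 * genWord 3 2) ^ n) ![a, b, c] =
      ![a, ((b * c) ^ n)⁻¹ * b * (b * c) ^ n, ((b * c) ^ n)⁻¹ * c * (b * c) ^ n] := by
  induction n with
  | zero => simp [act_one]
  | succ n ih =>
    rw [pow_succ, act_mul, ih, act_mul, act_g2, act_g2]
    have hc := (Commute.refl (b * c)).pow_left n
    rw [pow_succ]
    generalize (b * c) ^ n = P at *
    have e : (P⁻¹ * b * P) * (P⁻¹ * c * P) = b * c := by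
      calc _ = P⁻¹ * ((b * c) * P) := by group
        _ = _ := by rw [← hc.eq]; group
    congr 1
    have h1 : ∀ p q : G, q⁻¹ * p * q = (p * q)⁻¹ * p * (p * q) := fun p q => by group
    have h2 : ∀ p q : G, (q⁻¹ * p * q)⁻¹ * q * (q⁻¹ * p * q) = (p * q)⁻¹ * q * (p * q) :=
      fun p q => by group
    rw [h2, h1, e]
    simp only [mul_inv_rev, mul_assoc]

def T : FreeGroup (Fin (3 - 1)) := cWord 3 1 * cWord 3 2

lemma T_eq : T = genWord 3 1 * (genWord 3 2 * genWord 3 2) * genWord 3 1 := by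
  simp [T, cWord, List.range_succ, pow_two, mul_assoc]

lemma act_T {G : Type*} [Group G] (a b c : G) :
    hurwitzAct T ![a, b, c] =
      ![(a * b * c)⁻¹ * a * (a * b * c),
        ((b * c)⁻¹ * (a * b * c))⁻¹ * b * ((b * c)⁻¹ * (a * b * c)),
        ((b * c)⁻¹ * (a * b * c))⁻¹ * c * ((b * c)⁻¹ * (a * b * c))] := by
  rw [T_eq, act_mul, act_mul, act_mul, act_g1, act_g2, act_g2, act_g1]
  congr 1
  · group
  · congr 1
    · group
    · congr 1
      group

lemma act_T_pow {G : Type*} [Group G] (a b c : G) (n : ℕ) :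
    hurwitzAct (T ^ n) ![a, b, c] =
      ![((a * b * c) ^ n)⁻¹ * a * (a * b * c) ^ n,
        (((b * c) ^ n)⁻¹ * (a * b * c) ^ n)⁻¹ * b * (((b * c) ^ n)⁻¹ * (a * b * c) ^ n),
        (((b * c) ^ n)⁻¹ * (a * b * c) ^ n)⁻¹ * c * (((b * c) ^ n)⁻¹ * (a * b * c) ^ n)] := by
  induction n with
  | zero => simp [act_one]
  | succ n ih =>
    rw [pow_succ, act_mul, ih, act_T]
    have hD := ((Commute.refl (b * c)).pow_left n)
    have hC := ((Commute.refl (a * b * c)).pow_left n)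
    rw [pow_succ, pow_succ]
    clear ih
    generalize (a * b * c) ^ n = P at *
    generalize (b * c) ^ n = Q at *
    obtain ⟨D, hDd⟩ : ∃ D, D = b * c := ⟨_, rfl⟩
    have hCd : a * b * c = a * D := by rw [hDd, mul_assoc]
    rw [hCd] at hC ⊢
    rw [← hDd] at hD ⊢
    obtain ⟨C, hCC⟩ : ∃ C, C = a * D := ⟨_, rfl⟩
    rw [← hCC] at hC ⊢
    have eD : (Q⁻¹ * P)⁻¹ * b * (Q⁻¹ * P) * ((Q⁻¹ * P)⁻¹ * c * (Q⁻¹ * P)) = P⁻¹ * D * P := by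
      calc _ = P⁻¹ * (Q * D) * Q⁻¹ * P := by rw [hDd]; group
        _ = _ := by rw [hD.eq]; group
    have eC : P⁻¹ * a * P * ((Q⁻¹ * P)⁻¹ * b * (Q⁻¹ * P)) * ((Q⁻¹ * P)⁻¹ * c * (Q⁻¹ * P)) = C := by
      rw [mul_assoc, eD]
      calc _ = P⁻¹ * (C * P) := by rw [hCC]; group
        _ = _ := by rw [← hC.eq]; group
    rw [eC, eD]
    have e2 : Q⁻¹ * P * ((P⁻¹ * D * P)⁻¹ * C) = (Q * D)⁻¹ * (P * C) := by
      rw [hD.eq]; group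
    have conj : ∀ p q r : G, q⁻¹ * (p⁻¹ * r * p) * q = (p * q)⁻¹ * r * (p * q) := fun p q r => by
      group
    rw [conj, conj, conj, e2]

lemma commute_of_conj {G : Type*} [Group G] {p r : G} (h : p⁻¹ * r * p = r) : Commute p r := by
  rw [mul_assoc, inv_mul_eq_iff_eq_mul] at h
  exact h.symm

lemma conj_of_commute {G : Type*} [Group G] {p r : G} (h : Commute p r) : p⁻¹ * r * p = r := by
  rw [mul_assoc, inv_mul_eq_iff_eq_mul]
  exact h.symm

lemma main (a b c : B) (hfin : (hurwitzOrbit ![a, b, c]).Finite)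
    (hD : Even (esum (b * c))) (hC : Even (esum (a * b * c))) :
    hurwitzAct (T ^ 3) ![a, b, c] = ![a, b, c] := by
  obtain ⟨k, hk, hkk⟩ := period _ hfin (genWord 3 2 * genWord 3 2)
  rw [act_sq_pow] at hkk
  have hb : Commute ((b * c) ^ k) b := commute_of_conj (by simpa using congrFun hkk 1)
  have hc : Commute ((b * c) ^ k) c := commute_of_conj (by simpa using congrFun hkk 2)
  obtain ⟨n, hn, hnn⟩ := period _ hfin (T ^ k)
  rw [← pow_mul, act_T_pow] at hnn
  have hN : 1 ≤ k * n := Nat.mul_pos hk hn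
  have hb' : Commute ((b * c) ^ (k * n)) b := by rw [pow_mul]; exact hb.pow_left n
  have hc' : Commute ((b * c) ^ (k * n)) c := by rw [pow_mul]; exact hc.pow_left n
  have ga : Commute ((a * b * c) ^ (k * n)) a := commute_of_conj (by simpa using congrFun hnn 0)
  have gb : Commute ((a * b * c) ^ (k * n)) b := by
    have h : Commute (((b * c) ^ (k * n))⁻¹ * (a * b * c) ^ (k * n)) b :=
      commute_of_conj (congrFun hnn 1)
    have := hb'.mul_left h
    simpa using this
  have gc : Commute ((a * b * c) ^ (k * n)) c := by
    have h : Commute (((b * c) ^ (k * n))⁻¹ * (a * b * c) ^ (k * n)) c :=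
      commute_of_conj (congrFun hnn 2)
    have := hc'.mul_left h
    simpa using this
  have D3 : Commute ((b * c) ^ 3) b ∧ Commute ((b * c) ^ 3) c := by
    rcases key (b * c) hD k hk b c hb hc with h | h
    · exact ⟨((Commute.refl b).mul_left h.symm).pow_left 3,
        (h.mul_left (Commute.refl c)).pow_left 3⟩
    · exact ⟨h b, h c⟩
  have C3 : Commute ((a * b * c) ^ 3) a ∧ Commute ((a * b * c) ^ 3) b ∧
      Commute ((a * b * c) ^ 3) c := by
    by_cases hh : ∀ g, Commute ((a * b * c) ^ 3) g
    · exact ⟨hh a, hh b, hh c⟩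
    · have ab := (key _ hC _ hN a b ga gb).resolve_right hh
      have ac := (key _ hC _ hN a c ga gc).resolve_right hh
      have bc := (key _ hC _ hN b c gb gc).resolve_right hh
      exact ⟨(((Commute.refl a).mul_left ab.symm).mul_left ac.symm).pow_left 3,
        ((ab.mul_left (Commute.refl b)).mul_left bc.symm).pow_left 3,
        ((ac.mul_left bc).mul_left (Commute.refl c)).pow_left 3⟩
  rw [act_T_pow, conj_of_commute C3.1, conj_of_commute (D3.1.inv_left.mul_left C3.2.1),
    conj_of_commute (D3.2.inv_left.mul_left C3.2.2)]

end P22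

/-- For an irreducible `(2,2)`-periodic system with finite Hurwitz orbit,
`s·(c_1 c_2)^3 = s`. -/
theorem period22_cword_cube (s : Fin 3 → BraidGroup 3)
    (hirr : ¬ IsReducible s)
    (hfin : (hurwitzOrbit s).Finite)
    (h1 : Int.ModEq 6 (esum (s 0)) 2 ∨ Int.ModEq 6 (esum (s 0)) (-2))
    (h2 : Int.ModEq 6 (esum (s 1)) 1 ∨ Int.ModEq 6 (esum (s 1)) (-1))
    (h3 : Int.ModEq 6 (esum (s 2)) 1 ∨ Int.ModEq 6 (esum (s 2)) (-1)) :
    hurwitzAct ((cWord 3 1 * cWord 3 2) ^ 3) s = s := by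
  have hs : s = ![s 0, s 1, s 2] := by
    funext i; fin_cases i <;> rfl
  have e1 : ∀ a : P22.B, Int.ModEq 6 (esum a) 1 ∨ Int.ModEq 6 (esum a) (-1) → esum a % 2 = 1 := by
    intro a h; simp only [Int.ModEq] at h; omega
  have e2 : esum (s 0) % 2 = 0 := by
    simp only [Int.ModEq] at h1; omega
  have e3 := e1 _ h2
  have e4 := e1 _ h3
  have := P22.main (s 0) (s 1) (s 2) (hs ▸ hfin)
    (by rw [P22.esum_mul, Int.even_iff]; omega)
    (by rw [P22.esum_mul, P22.esum_mul, Int.even_iff]; omega)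
  rw [hs]
  exact this
end

section
/- Let s = (β_1, β_2, β_3) ∈ B_3^3 be an irreducible braid system whose Hurwitz orbit s·B_3 is finite, and suppose s is (2,3)-periodic, i.e. e(β_1) ≡ ±1 (mod 6) and e(β_2) ≡ ±2 (mod 6) and e(β_3) ≡ ±1 (mod 6). Then (1) s·(c_1c_2)^2 ≠ s, and (2) s·(c_1c_2)^2 is a simple vertex if and only if s is a simple vertex, where a braid system t ∈ B_3^3 is called a simple vertex if t·c_1 = t or t·c_2 = t. -/
/-- A braid system `t` of degree 3, length 3 is a simple vertex if `t·c_1 = t` or `t·c_2 = t`. -/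
def SimpleVertex (t : Fin 3 → BraidGroup 3) : Prop :=
  hurwitzAct (cWord 3 1) t = t ∨ hurwitzAct (cWord 3 2) t = t

namespace P23

abbrev B3 := BraidGroup 3

def sa : B3 := PresentedGroup.of (rels := braidRels 3) (0 : Fin 2)
def sb : B3 := PresentedGroup.of (rels := braidRels 3) (1 : Fin 2)

lemma braid_rel : sa * sb * sa = sb * sa * sb := by
  have h : PresentedGroup.mk (braidRels 3) (FreeGroup.of (0 : Fin 2) * FreeGroup.of (1 : Fin 2) *
      FreeGroup.of (0 : Fin 2) * (FreeGroup.of (1 : Fin 2) * FreeGroup.of (0 : Fin 2) *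
      FreeGroup.of (1 : Fin 2))⁻¹) = 1 := by
    apply PresentedGroup.one_of_mem
    right
    exact ⟨(0 : Fin 2), (1 : Fin 2), Or.inl rfl, rfl⟩
  rw [map_mul, map_inv, mul_inv_eq_one] at h
  simp only [map_mul] at h
  exact h

def x : B3 := sa * sb * sa
def y : B3 := sa * sb
def z : B3 := x * x

lemma xa : x * sa = sb * x := by
  have h := braid_rel
  unfold x
  calc sa * sb * sa * sa = (sb * sa * sb) * sa := by rw [h]
    _ = sb * (sa * sb * sa) := by group

lemma xb : x * sb = sa * x := by
  have h := braid_rel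
  unfold x
  calc sa * sb * sa * sb = sa * (sb * sa * sb) := by group
    _ = sa * (sa * sb * sa) := by rw [h]

lemma za : z * sa = sa * z := by
  unfold z
  rw [mul_assoc, xa, ← mul_assoc, xb, mul_assoc]

lemma zb : z * sb = sb * z := by
  unfold z
  rw [mul_assoc, xb, ← mul_assoc, xa, mul_assoc]

lemma yyy : y * y * y = z := by
  have h : y * y * y = x * (sb * sa * sb) := by
    unfold x y; group
  rw [h, ← braid_rel]; rfl

lemma zx : z * x = x * z := by unfold z; group
lemma zy : z * y = y * z := by
  unfold y; rw [← mul_assoc, za, mul_assoc, zb, mul_assoc]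

lemma gen_top : Subgroup.closure ({sa, sb} : Set B3) = ⊤ := by
  rw [← PresentedGroup.closure_range_of (braidRels 3)]
  congr 1
  ext g
  constructor
  · rintro (rfl | rfl)
    · exact ⟨0, rfl⟩
    · exact ⟨1, rfl⟩
  · rintro ⟨i, rfl⟩
    change Fin 2 at i
    fin_cases i
    · exact Or.inl rfl
    · exact Or.inr rfl

lemma z_comm (g : B3) : z * g = g * z := by
  have hg : g ∈ Subgroup.closure ({sa, sb} : Set B3) := by rw [gen_top]; trivial
  induction hg using Subgroup.closure_induction with
  | mem w hw =>
    rcases hw with rfl | rfl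
    · exact za
    · exact zb
  | one => simp
  | mul u v _ _ hu hv => rw [← mul_assoc, hu, mul_assoc, hv, mul_assoc]
  | inv u _ hu => exact (Commute.inv_right (show Commute z u from hu))

lemma zpow_comm (n : ℤ) (g : B3) : Commute (z ^ n) g :=
  Commute.zpow_left (z_comm g) n

/-- positive words in `xy`, `xyy` -/
inductive Pos : B3 → Prop
  | one : Pos 1
  | l (w : B3) : Pos w → Pos (x * y * w)
  | r (w : B3) : Pos w → Pos (x * y * y * w)

def NF (g : B3) : Prop :=
  ∃ (n : ℤ) (e d : ℕ) (w : B3), e < 3 ∧ d < 2 ∧ Pos w ∧ g = z ^ n * (y ^ e * w * x ^ d)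

lemma NF.z {g : B3} (h : NF g) (k : ℤ) : NF (z ^ k * g) := by
  obtain ⟨n, e, d, w, he, hd, hw, rfl⟩ := h
  exact ⟨k + n, e, d, w, he, hd, hw, by rw [← mul_assoc, zpow_add]⟩

lemma NF.y {g : B3} (h : NF g) : NF (y * g) := by
  obtain ⟨n, e, d, w, he, hd, hw, rfl⟩ := h
  have h1 : P23.y * (P23.z ^ n * (P23.y ^ e * w * x ^ d)) =
      P23.z ^ n * (P23.y ^ (e + 1) * w * x ^ d) := by
    rw [← mul_assoc, ← (zpow_comm n P23.y).eq, pow_succ']; group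
  rw [h1]
  apply NF.z
  by_cases h2 : e + 1 < 3
  · exact ⟨0, e + 1, d, w, h2, hd, hw, by simp⟩
  · have : e = 2 := by omega
    subst this
    refine ⟨1, 0, d, w, by omega, hd, hw, ?_⟩
    rw [← yyy]
    group

lemma NF.x {g : B3} (h : NF g) : NF (x * g) := by
  obtain ⟨n, e, d, w, he, hd, hw, rfl⟩ := h
  have h1 : P23.x * (P23.z ^ n * (P23.y ^ e * w * P23.x ^ d)) =
      P23.z ^ n * (P23.x * (P23.y ^ e * w * P23.x ^ d)) := by
    rw [← mul_assoc, ← (zpow_comm n P23.x).eq]; group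
  rw [h1]
  apply NF.z
  interval_cases e
  · cases hw with
    | one =>
      interval_cases d
      · exact ⟨0, 0, 1, 1, by omega, by omega, Pos.one, by simp⟩
      · exact ⟨1, 0, 0, 1, by omega, by omega, Pos.one, by simp [P23.z]⟩
    | l w hw => exact ⟨1, 1, d, w, by omega, hd, hw, by simp [P23.z, mul_assoc]⟩
    | r w hw => exact ⟨1, 2, d, w, by omega, hd, hw, by simp [P23.z, mul_assoc, pow_two]⟩
  · exact ⟨0, 0, d, _, by omega, hd, Pos.l w hw, by simp [mul_assoc]⟩
  · exact ⟨0, 0, d, _, by omega, hd, Pos.r w hw, by simp [mul_assoc, pow_two]⟩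

lemma sa_eq : sa = z ^ (-1 : ℤ) * (y * (y * x)) := by
  have h : y * y * y * sa = y * (y * x) := by unfold y x; group
  rw [← h, yyy]; group

lemma sb_eq : sb = z ^ (-1 : ℤ) * (x * (y * y)) := by
  have h : x * x * sb = x * (y * y) := by
    unfold x y; group
  rw [← h]; unfold z; group

lemma sa_inv : sa⁻¹ = z ^ (-1 : ℤ) * (x * y) := by
  have h : x⁻¹ * y = sa⁻¹ := by
    have h2 : x = y * sa := rfl
    have h3 : x = sb * sa * sb := braid_rel
    have : x * sa⁻¹ = y := by rw [h2]; group
    rw [← this]; group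
  rw [← h]; unfold z; group

lemma sb_inv : sb⁻¹ = z ^ (-1 : ℤ) * (y * x) := by
  have h : y * x * sb = z := by
    rw [mul_assoc, xb]; rw [show z = x * x from rfl]; unfold y x; group
  rw [← h]
  have := zpow_comm (-1) sb⁻¹
  rw [← h] at this
  group at this ⊢

lemma nf_all (g : B3) : NF g := by
  have hg : g ∈ Subgroup.closure ({sa, sb} : Set B3) := by rw [gen_top]; trivial
  induction hg using Subgroup.closure_induction_left with
  | one => exact ⟨0, 0, 0, 1, by omega, by omega, Pos.one, by simp⟩
  | mul_left u hu v _ hv =>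
    rcases hu with rfl | rfl
    · rw [sa_eq]; simp only [mul_assoc]; exact hv.x.y.y.z _
    · rw [sb_eq]; simp only [mul_assoc]; exact hv.y.y.x.z _
  | inv_mul_cancel u hu v _ hv =>
    rcases hu with rfl | rfl
    · rw [sa_inv]; simp only [mul_assoc]; exact hv.y.x.z _
    · rw [sb_inv]; simp only [mul_assoc]; exact hv.x.y.z _

abbrev M2 := Matrix (Fin 2) (Fin 2) ℤ

def ma : Matrix.SpecialLinearGroup (Fin 2) ℤ := ⟨!![1, 1; 0, 1], by simp [Matrix.det_fin_two]⟩
def mb : Matrix.SpecialLinearGroup (Fin 2) ℤ := ⟨!![1, 0; -1, 1], by simp [Matrix.det_fin_two]⟩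

lemma mab : ma * mb * ma = mb * ma * mb := by
  apply Subtype.ext
  rw [Matrix.SpecialLinearGroup.coe_mul, Matrix.SpecialLinearGroup.coe_mul,
    Matrix.SpecialLinearGroup.coe_mul, Matrix.SpecialLinearGroup.coe_mul]
  simp [ma, mb]

def rho : B3 →* Matrix.SpecialLinearGroup (Fin 2) ℤ :=
  PresentedGroup.toGroup (f := fun i : Fin 2 => if i = 0 then ma else mb) (by
    rintro r (⟨i, j, h, rfl⟩ | ⟨i, j, h, rfl⟩)
    · exfalso
      have := i.isLt; have := j.isLt
      omega
    · change Fin 2 at i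
      change Fin 2 at j
      have hm := mab
      fin_cases i <;> fin_cases j <;> simp at h ⊢
      · rw [hm]; group
      · rw [← hm]; group)

def m (g : B3) : M2 := (rho g : M2)

lemma m_mul (g h : B3) : m (g * h) = m g * m h := by simp [m]
lemma m_one : m 1 = 1 := by simp [m]
lemma m_pow (g : B3) (k : ℕ) : m (g ^ k) = m g ^ k := by simp [m]
lemma m_det (g : B3) : m g 0 0 * m g 1 1 - m g 0 1 * m g 1 0 = 1 := by
  have := (rho g).det_coe
  rwa [Matrix.det_fin_two] at this

lemma m_a : m sa = !![1, 1; 0, 1] := by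
  unfold m sa rho
  rw [PresentedGroup.toGroup.of]; rfl
lemma m_b : m sb = !![1, 0; -1, 1] := by
  unfold m sb rho
  rw [PresentedGroup.toGroup.of]; rfl
lemma m_y : m y = !![0, 1; -1, 1] := by
  unfold y; rw [m_mul, m_a, m_b]; simp
lemma m_x : m x = !![0, 1; -1, 0] := by
  unfold x; rw [m_mul, m_mul, m_a, m_b]; simp
lemma m_z : m z = -1 := by
  unfold z; rw [m_mul, m_x]
  ext i j; fin_cases i <;> fin_cases j <;> simp

lemma m_zpow (n : ℤ) : (Even n → m (z ^ n) = 1) ∧ (Odd n → m (z ^ n) = -1) := by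
  have h2 : rho z * rho z = 1 := by
    apply Subtype.ext
    have := m_z
    unfold m at this
    simp [this]
  constructor
  · rintro ⟨k, rfl⟩
    unfold m
    rw [map_zpow, ← two_mul, zpow_mul, zpow_two, h2]; simp
  · rintro ⟨k, rfl⟩
    have := m_z
    unfold m at this ⊢
    rw [map_zpow, zpow_add, zpow_mul, zpow_two, h2]; simp [this]

lemma m_zpow_or (n : ℤ) : m (z ^ n) = 1 ∨ m (z ^ n) = -1 := by
  rcases Int.even_or_odd n with h | h
  · exact Or.inl ((m_zpow n).1 h)
  · exact Or.inr ((m_zpow n).2 h)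

lemma pos_m {w : B3} (h : Pos w) : ∃ (s p q r t : ℤ), (s = 1 ∨ s = -1) ∧ 1 ≤ p ∧ 0 ≤ q ∧ 0 ≤ r ∧
    1 ≤ t ∧ m w = !![s * p, -(s * q); -(s * r), s * t] ∧ (q + r = 0 → w = 1) := by
  induction h with
  | one => exact ⟨1, 1, 0, 0, 1, by simp, by simp, by simp, by simp, by simp, by
      rw [m_one]; ext i j; fin_cases i <;> fin_cases j <;> simp, by simp⟩
  | l w _ ih =>
    obtain ⟨s, p, q, r, t, hs, hp, hq, hr, ht, hm, -⟩ := ih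
    refine ⟨-s, p + r, q + t, r, t, by omega, by omega, by omega, by omega, by omega, ?_, by omega⟩
    rw [m_mul, m_mul, m_x, m_y, hm]
    ext i j; fin_cases i <;> fin_cases j <;> simp <;> ring
  | r w _ ih =>
    obtain ⟨s, p, q, r, t, hs, hp, hq, hr, ht, hm, -⟩ := ih
    refine ⟨-s, p, q, p + r, q + t, by omega, by omega, by omega, by omega, by omega, ?_, by omega⟩
    rw [m_mul, m_mul, m_mul, m_x, m_y, hm]
    ext i j; fin_cases i <;> fin_cases j <;> simp <;> ring

lemma ker (g : B3) (h : m g = 1 ∨ m g = -1) : ∃ n : ℤ, g = z ^ n := by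
  obtain ⟨n, e, d, w, he, hd, hw, rfl⟩ := nf_all g
  obtain ⟨s, p, q, r, t, hs, hp, hq, hr, ht, hm, hw1⟩ := pos_m hw
  rw [m_mul] at h
  have h' : m (y ^ e * w * x ^ d) = 1 ∨ m (y ^ e * w * x ^ d) = -1 := by
    rcases m_zpow_or n with hz | hz <;> rw [hz] at h
    · simpa using h
    · rcases h with h | h
      · right; rw [← h]; simp
      · left; simpa using h
  have h01 : m (y ^ e * w * x ^ d) 0 1 = 0 := by rcases h' with h' | h' <;> rw [h'] <;> simp
  have h10 : m (y ^ e * w * x ^ d) 1 0 = 0 := by rcases h' with h' | h' <;> rw [h'] <;> simp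
  rw [m_mul, m_mul, m_pow, m_pow, m_x, m_y, hm] at h01 h10
  refine ⟨n, ?_⟩
  interval_cases e <;> interval_cases d <;> rcases hs with rfl | rfl <;>
    simp [pow_two] at h01 h10 <;> first | (exfalso; omega) | (rw [hw1 (by omega)]; simp)

lemma esum_mul (g h : B3) : esum (g * h) = esum g + esum h := by simp [esum]
lemma esum_one : esum (1 : B3) = 0 := by simp [esum]
lemma esum_inv (g : B3) : esum g⁻¹ = - esum g := by simp [esum]
lemma esum_zpow (g : B3) (n : ℤ) : esum (g ^ n) = n * esum g := by simp [esum]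
lemma esum_a : esum sa = 1 := by
  unfold esum sa expSumHom
  rw [PresentedGroup.toGroup.of]; rfl
lemma esum_b : esum sb = 1 := by
  unfold esum sb expSumHom
  rw [PresentedGroup.toGroup.of]; rfl
lemma esum_z : esum z = 6 := by
  unfold z x; simp only [esum_mul, esum_a, esum_b]; norm_num

lemma comm_of_m {g h : B3} (hc : m g * m h = m h * m g) : g * h = h * g := by
  have h1 : m (g * h * (h * g)⁻¹) = 1 := by
    have : rho (g * h) = rho (h * g) := by
      apply Subtype.ext
      have h1 := m_mul g h
      have h2 := m_mul h g
      unfold m at h1 h2 hc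
      rw [h1, h2, hc]
    unfold m
    rw [map_mul, map_inv, this]; simp
  obtain ⟨n, hn⟩ := ker _ (Or.inl h1)
  have he := congrArg esum hn
  rw [esum_zpow, esum_z, esum_mul, esum_inv, esum_mul, esum_mul] at he
  have : n = 0 := by linarith
  rw [this, zpow_zero, mul_inv_eq_one] at hn
  exact hn

lemma m_of_comm {g h : B3} (hc : g * h = h * g) : m g * m h = m h * m g := by
  rw [← m_mul, ← m_mul, hc]

lemma cayley (g : B3) {t : ℤ} (ht : t = m g 0 0 + m g 1 1) : m g * m g = t • m g - 1 := by
  subst ht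
  have h := m_det g
  ext i j
  rw [Matrix.sub_apply, Matrix.smul_apply, smul_eq_mul, Matrix.mul_apply, Fin.sum_univ_two]
  fin_cases i <;> fin_cases j <;> simp <;> linarith

lemma pow_form (g : B3) (k : ℕ) : ∃ p q : ℤ, m g ^ (k + 1) = p • m g - q • (1 : M2) ∧
    (2 ≤ |m g 0 0 + m g 1 1| → |q| < |p|) := by
  induction k with
  | zero => exact ⟨1, 0, by simp, by simp⟩
  | succ k ih =>
    obtain ⟨p, q, h, hl⟩ := ih
    refine ⟨p * (m g 0 0 + m g 1 1) - q, p, ?_, ?_⟩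
    · rw [pow_succ, h, sub_mul, smul_mul_assoc, cayley g rfl, smul_mul_assoc, one_mul, smul_sub,
        smul_smul, sub_smul]
      abel
    · intro ht
      have h1 := hl ht
      have h2 := abs_sub_abs_le_abs_sub (p * (m g 0 0 + m g 1 1)) q
      rw [abs_mul] at h2
      nlinarith [abs_nonneg p, abs_nonneg q]

lemma key {g u : B3} (ho : ¬ Even (esum g)) (k : ℕ) (hk : g ^ (k + 1) * u = u * g ^ (k + 1)) :
    g * u = u * g ∨ ∃ n : ℤ, g * g = z ^ n := by
  obtain ⟨p, q, h, hl⟩ := pow_form g k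
  have hc := cayley g rfl
  by_cases ht : 2 ≤ |m g 0 0 + m g 1 1|
  · left
    have hpq := hl ht
    have hp : p ≠ 0 := by
      rintro rfl
      have := abs_nonneg q
      simp at hpq
      omega
    apply comm_of_m
    have h2 := m_of_comm hk
    rw [m_pow, h] at h2
    simp only [sub_mul, mul_sub, smul_mul_assoc, mul_smul_comm, one_mul, mul_one] at h2
    have h3 : p • (m g * m u) = p • (m u * m g) := sub_left_injective h2
    exact smul_right_injective _ hp h3
  · right
    have : |m g 0 0 + m g 1 1| ≤ 1 := by omega
    rw [abs_le] at this
    have hcase : m g 0 0 + m g 1 1 = 0 ∨ m g 0 0 + m g 1 1 = 1 ∨ m g 0 0 + m g 1 1 = -1 := by omega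
    have h3 : ∀ n : ℤ, g * g * g = z ^ n → False := by
      intro n hn
      have := congrArg esum hn
      rw [esum_zpow, esum_z, esum_mul, esum_mul] at this
      apply ho
      exact ⟨n, by omega⟩
    rcases hcase with h0 | h0 | h0 <;> rw [h0] at hc
    · apply ker
      right
      rw [m_mul, hc]; simp
    · exfalso
      obtain ⟨n, hn⟩ := ker (g * g * g) (Or.inr (by
        rw [m_mul, m_mul, hc, one_smul, sub_mul, hc]; simp))
      exact h3 n hn
    · exfalso
      obtain ⟨n, hn⟩ := ker (g * g * g) (Or.inl (by
        rw [m_mul, m_mul, hc, neg_one_smul, sub_mul, neg_mul, hc]; simp))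
      exact h3 n hn

lemma comm_entries (A B : M2) : A * B = B * A ↔
    (A 0 1 * B 1 0 = A 1 0 * B 0 1) ∧ (A 0 1 * (B 0 0 - B 1 1) = B 0 1 * (A 0 0 - A 1 1)) ∧
      (A 1 0 * (B 0 0 - B 1 1) = B 1 0 * (A 0 0 - A 1 1)) := by
  constructor
  · intro h
    have h00 := congrFun (congrFun h 0) 0
    have h01 := congrFun (congrFun h 0) 1
    have h10 := congrFun (congrFun h 1) 0
    simp only [Matrix.mul_apply, Fin.sum_univ_two] at h00 h01 h10
    refine ⟨by linarith, by linarith, by linarith⟩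
  · rintro ⟨h1, h2, h3⟩
    ext i j
    fin_cases i <;> fin_cases j <;> simp [Matrix.mul_apply, Fin.sum_univ_two] <;> linarith

lemma cross (a b c d e f u v w : ℤ) (hne : a ≠ 0 ∨ b ≠ 0 ∨ c ≠ 0)
    (h1 : a * e = b * d) (h2 : a * f = d * c) (h3 : b * f = e * c)
    (k1 : a * v = b * u) (k2 : a * w = u * c) (k3 : b * w = v * c) :
    d * v = e * u ∧ d * w = u * f ∧ e * w = v * f := by
  rcases hne with h | h | h
  · have q : d * v = e * u := mul_left_cancel₀ h (by linear_combination d * k1 - u * h1)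
    refine ⟨q, mul_left_cancel₀ h ?_, mul_left_cancel₀ h ?_⟩
    · linear_combination d * k2 - u * h2
    · linear_combination e * k2 - v * h2 - c * q
  · have q : d * v = e * u := mul_left_cancel₀ h (by linear_combination e * k1 - v * h1)
    refine ⟨q, mul_left_cancel₀ h ?_, mul_left_cancel₀ h ?_⟩
    · linear_combination d * k3 - u * h3 + c * q
    · linear_combination e * k3 - v * h3
  · have q : e * w = v * f := mul_left_cancel₀ h (by linear_combination f * k3 - w * h3)
    refine ⟨mul_left_cancel₀ h ?_, mul_left_cancel₀ h ?_, q⟩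
    · linear_combination e * k2 - v * h2 - a * q
    · linear_combination f * k2 - w * h2

lemma scalar {g : B3} (c1 : m g 0 1 = 0) (c2 : m g 1 0 = 0) (h11 : m g 1 1 = m g 0 0) :
    ∃ n : ℤ, g = z ^ n := by
  have hd := m_det g
  rw [c1, h11, zero_mul, sub_zero] at hd
  have hone : m g 0 0 = 1 ∨ m g 0 0 = -1 := by
    have : (m g 0 0 - 1) * (m g 0 0 + 1) = 0 := by linear_combination hd
    rcases mul_eq_zero.1 this with h | h
    · left; omega
    · right; omega
  apply ker
  rcases hone with h | h
  · left; ext i j; fin_cases i <;> fin_cases j <;> simp [h11, h, c1, c2]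
  · right; ext i j; fin_cases i <;> fin_cases j <;> simp [h11, h, c1, c2]

lemma comm_trans {g u v : B3} (hg : ∀ n : ℤ, g ≠ z ^ n) (hu : g * u = u * g) (hv : g * v = v * g) :
    u * v = v * u := by
  have h1 := (comm_entries _ _).1 (m_of_comm hu)
  have h2 := (comm_entries _ _).1 (m_of_comm hv)
  apply comm_of_m
  rw [comm_entries]
  apply cross (m g 0 1) (m g 1 0) (m g 0 0 - m g 1 1)
  · by_contra hcon
    push Not at hcon
    obtain ⟨c1, c2, c3⟩ := hcon
    obtain ⟨n, hn⟩ := scalar c1 c2 (by linarith)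
    exact hg n hn
  · exact h1.1
  · exact h1.2.1
  · exact h1.2.2
  · exact h2.1
  · exact h2.2.1
  · exact h2.2.2

section act
variable {G : Type*} [Group G]

lemma act_mul {n : ℕ} (v w : FreeGroup (Fin (n - 1))) (s : Fin n → G) :
    hurwitzAct (v * w) s = hurwitzAct w (hurwitzAct v s) := by
  simp [hurwitzAct]

lemma act_one {n : ℕ} (s : Fin n → G) : hurwitzAct (1 : FreeGroup (Fin (n - 1))) s = s := by
  simp [hurwitzAct]

lemma act_of {n : ℕ} (i : Fin (n - 1)) (s : Fin n → G) :
    hurwitzAct (FreeGroup.of i) s = hEquiv i s := by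
  simp [hurwitzAct]

lemma act_inv_eq {n : ℕ} (w : FreeGroup (Fin (n - 1))) (s t : Fin n → G)
    (h : hurwitzAct w t = s) : hurwitzAct w⁻¹ s = t := by
  rw [← h, ← act_mul, mul_inv_cancel, act_one]

def cj {n : ℕ} (g : G) (s : Fin n → G) : Fin n → G := fun i => g⁻¹ * s i * g

lemma act_cj {n : ℕ} (w : FreeGroup (Fin (n - 1))) (g : G) : ∀ s : Fin n → G,
    hurwitzAct w (cj g s) = cj g (hurwitzAct w s) := by
  induction w using FreeGroup.induction_on with
  | C1 => intro s; simp [act_one]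
  | of i =>
    intro s
    change hurwitzAct (FreeGroup.of i) _ = cj g (hurwitzAct (FreeGroup.of i) s)
    rw [act_of, act_of]
    funext k
    simp only [hEquiv, cj, Equiv.coe_fn_mk]
    split_ifs <;> group
  | inv_of i ih =>
    intro s
    change hurwitzAct (FreeGroup.of i)⁻¹ _ = cj g (hurwitzAct (FreeGroup.of i)⁻¹ s)
    apply act_inv_eq
    have := ih (hurwitzAct (FreeGroup.of i)⁻¹ s)
    change hurwitzAct (FreeGroup.of i) _ = cj g (hurwitzAct (FreeGroup.of i) _) at this
    rw [this, ← act_mul, inv_mul_cancel, act_one]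
  | mul u v hu hv => intro s; rw [act_mul, act_mul, hu, hv]

lemma cj_inj {n : ℕ} (g : G) {s t : Fin n → G} (h : cj g s = cj g t) : s = t := by
  funext i
  have := congrFun h i
  simpa [cj] using this

lemma act0 (s : Fin 3 → G) : hurwitzAct (n := 3) (FreeGroup.of (0 : Fin 2)) s =
    ![s 1, (s 1)⁻¹ * s 0 * s 1, s 2] := by
  rw [act_of (n := 3)]
  funext k
  fin_cases k <;> simp [hEquiv]

lemma act1 (s : Fin 3 → G) : hurwitzAct (n := 3) (FreeGroup.of (1 : Fin 2)) s =
    ![s 0, s 2, (s 2)⁻¹ * s 1 * s 2] := by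
  rw [act_of (n := 3)]
  funext k
  fin_cases k <;> simp [hEquiv]

lemma cc_eq : cWord 3 1 * cWord 3 2 = (FreeGroup.of (0 : Fin 2)) * (FreeGroup.of (1 : Fin 2)) *
    (FreeGroup.of (1 : Fin 2)) * (FreeGroup.of (0 : Fin 2)) := by
  have e1 : genWord 3 1 = FreeGroup.of (0 : Fin 2) := by simp [genWord]
  have e2 : genWord 3 2 = FreeGroup.of (1 : Fin 2) := by simp [genWord]
  simp only [cWord]
  simp [List.range_succ, e1, e2, pow_two, mul_assoc]

lemma act_cc (s : Fin 3 → G) : hurwitzAct (cWord 3 1 * cWord 3 2) s =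
    cj (s 0 * s 1 * s 2) ![s 0, (s 1 * s 2) * s 1 * (s 1 * s 2)⁻¹,
      (s 1 * s 2) * s 2 * (s 1 * s 2)⁻¹] := by
  rw [cc_eq]
  rw [act_mul (n := 3), act_mul (n := 3), act_mul (n := 3), act0, act1, act1, act0]
  funext k
  fin_cases k <;> simp [cj] <;> group

lemma act_cc2 (s : Fin 3 → G) (h1 : (s 1 * s 2) ^ 2 * s 1 = s 1 * (s 1 * s 2) ^ 2)
    (h2 : (s 1 * s 2) ^ 2 * s 2 = s 2 * (s 1 * s 2) ^ 2) :
    hurwitzAct ((cWord 3 1 * cWord 3 2) ^ 2) s = cj ((s 0 * s 1 * s 2) ^ 2) s := by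
  rw [pow_two (cWord 3 1 * cWord 3 2), act_mul, act_cc s, act_cj, act_cc]
  have h1' : (s 1 * s 2) ^ 2 * s 1 * ((s 1 * s 2) ^ 2)⁻¹ = s 1 := by rw [h1]; group
  have h2' : (s 1 * s 2) ^ 2 * s 2 * ((s 1 * s 2) ^ 2)⁻¹ = s 2 := by rw [h2]; group
  funext k
  fin_cases k
  · simp [cj, pow_two, mul_assoc]
  · simp only [cj]
    simp only [Fin.mk_one, Fin.isValue]
    rw [show ((s 0 * s 1 * s 2) ^ 2)⁻¹ * s 1 * (s 0 * s 1 * s 2) ^ 2 =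
      ((s 0 * s 1 * s 2) ^ 2)⁻¹ * ((s 1 * s 2) ^ 2 * s 1 * ((s 1 * s 2) ^ 2)⁻¹) *
      (s 0 * s 1 * s 2) ^ 2 by rw [h1']]
    simp [pow_two, mul_assoc]
  · simp only [cj]
    simp only [Fin.reduceFinMk, Fin.isValue]
    rw [show ((s 0 * s 1 * s 2) ^ 2)⁻¹ * s 2 * (s 0 * s 1 * s 2) ^ 2 =
      ((s 0 * s 1 * s 2) ^ 2)⁻¹ * ((s 1 * s 2) ^ 2 * s 2 * ((s 1 * s 2) ^ 2)⁻¹) *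
      (s 0 * s 1 * s 2) ^ 2 by rw [h2']]
    simp [pow_two, mul_assoc]

lemma act1_pow (s : Fin 3 → G) (k : ℕ) :
    hurwitzAct (n := 3) ((FreeGroup.of (1 : Fin 2) * FreeGroup.of (1 : Fin 2)) ^ k) s =
    ![s 0, ((s 1 * s 2) ^ k)⁻¹ * s 1 * (s 1 * s 2) ^ k,
      ((s 1 * s 2) ^ k)⁻¹ * s 2 * (s 1 * s 2) ^ k] := by
  induction k with
  | zero =>
    rw [pow_zero, act_one (n := 3)]
    funext k; fin_cases k <;> simp
  | succ k ih =>
    rw [pow_succ, act_mul (n := 3), ih, act_mul (n := 3), act1, act1]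
    funext j; fin_cases j <;> simp [pow_succ', mul_assoc]

lemma conj_aux {p q u : G} (h : Commute p q) (e : p⁻¹ * u * p = (p * q)⁻¹ * u * (p * q)) :
    q * u = u * q := by
  rw [h.eq] at e
  have e2 : u = q⁻¹ * u * q := by
    calc u = p * (p⁻¹ * u * p) * p⁻¹ := by group
      _ = q⁻¹ * u * q := by rw [e]; group
  calc q * u = q * (q⁻¹ * u * q) := by rw [← e2]
    _ = u * q := by group

lemma fin_pow (s : Fin 3 → G) (hfin : (hurwitzOrbit s).Finite) : ∃ k : ℕ,
    (s 1 * s 2) ^ (k + 1) * s 1 = s 1 * (s 1 * s 2) ^ (k + 1) ∧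
    (s 1 * s 2) ^ (k + 1) * s 2 = s 2 * (s 1 * s 2) ^ (k + 1) := by
  obtain ⟨i, -, j, -, hij, h⟩ := Set.infinite_univ.exists_lt_map_eq_of_mapsTo (α := ℕ) (t := hurwitzOrbit s)
    (f := fun k : ℕ => hurwitzAct (n := 3)
      ((FreeGroup.of (1 : Fin 2) * FreeGroup.of (1 : Fin 2)) ^ k) s)
    (fun k _ => ⟨_, rfl⟩) hfin
  obtain ⟨k, rfl⟩ := Nat.exists_eq_add_of_lt hij
  refine ⟨k, ?_⟩
  simp only [act1_pow] at h
  have e1 := congrFun h 1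
  have e2 := congrFun h 2
  simp only [add_assoc i k 1, pow_add _ i] at e1 e2
  have hcm : Commute ((s 1 * s 2) ^ i) ((s 1 * s 2) ^ (k + 1)) := Commute.pow_pow_self _ _ _
  exact ⟨conj_aux hcm e1, conj_aux hcm e2⟩

end act

end P23

open P23 in
/-- For an irreducible `(2,3)`-periodic system with finite Hurwitz orbit:
(1) `s·(c_1 c_2)^2 ≠ s`, and (2) `s·(c_1 c_2)^2` is a simple vertex iff `s` is. -/
theorem period23_cword_square (s : Fin 3 → BraidGroup 3)
    (hirr : ¬ IsReducible s)
    (hfin : (hurwitzOrbit s).Finite)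
    (h1 : Int.ModEq 6 (esum (s 0)) 1 ∨ Int.ModEq 6 (esum (s 0)) (-1))
    (h2 : Int.ModEq 6 (esum (s 1)) 2 ∨ Int.ModEq 6 (esum (s 1)) (-2))
    (h3 : Int.ModEq 6 (esum (s 2)) 1 ∨ Int.ModEq 6 (esum (s 2)) (-1)) :
    hurwitzAct ((cWord 3 1 * cWord 3 2) ^ 2) s ≠ s ∧
      (SimpleVertex (hurwitzAct ((cWord 3 1 * cWord 3 2) ^ 2) s) ↔ SimpleVertex s) := by
  obtain ⟨k, hk1, hk2⟩ := fin_pow s hfin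
  unfold Int.ModEq at h1 h2 h3
  have hodd : ¬ Even (esum (s 1 * s 2)) := by
    rw [esum_mul, Int.even_iff]; omega
  have hred : ∀ (_ : s 0 * s 1 = s 1 * s 0) (_ : s 0 * s 2 = s 2 * s 0), False := by
    intro a b
    apply hirr
    refine ⟨{0}, ⟨0, rfl⟩, ⟨1, by simp⟩, ?_⟩
    intro i hi j hj
    obtain rfl : i = 0 := hi
    fin_cases j
    · exact absurd rfl hj
    · exact a
    · exact b
  -- either `s 1`, `s 2` commute or the square of their product is central
  have hcases : s 1 * s 2 = s 2 * s 1 ∨ ∃ n : ℤ, (s 1 * s 2) * (s 1 * s 2) = z ^ n := by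
    rcases key hodd k hk1 with h | h
    · left
      have : s 1 * (s 2 * s 1) = s 1 * (s 1 * s 2) := by rw [← h, mul_assoc]
      exact (mul_left_cancel this).symm
    · exact Or.inr h
  have hsq : ∀ u, (u = s 1 ∨ u = s 2) → (s 1 * s 2) ^ 2 * u = u * (s 1 * s 2) ^ 2 := by
    intro u hu
    rcases hcases with h | ⟨n, h⟩
    · have h' : Commute (s 1) (s 2) := h
      rcases hu with rfl | rfl
      · exact (((Commute.refl _).mul_left h'.symm).pow_left 2)
      · exact ((h'.mul_left (Commute.refl _)).pow_left 2)
    · rw [pow_two, h]; exact zpow_comm n u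
  rw [act_cc2 s (hsq _ (Or.inl rfl)) (hsq _ (Or.inr rfl))]
  constructor
  · intro heq
    have hcomm : ∀ i, (s 0 * s 1 * s 2) ^ 2 * s i = s i * (s 0 * s 1 * s 2) ^ 2 := by
      intro i
      have := congrFun heq i
      simp only [cj] at this
      conv_lhs => rw [← this]
      group
    have heC : esum (s 0 * s 1 * s 2) = esum (s 0) + esum (s 1) + esum (s 2) := by
      rw [esum_mul, esum_mul]
    by_cases hz : ∃ n : ℤ, (s 0 * s 1 * s 2) ^ 2 = z ^ n
    · obtain ⟨n, hn⟩ := hz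
      have hen := congrArg esum hn
      rw [pow_two, esum_mul, heC, esum_zpow, esum_z] at hen
      have hmn : m ((s 0 * s 1 * s 2) * (s 0 * s 1 * s 2)) = 1 := by
        rw [← pow_two, hn]
        exact (m_zpow n).1 (by rw [Int.even_iff]; omega)
      rw [m_mul, cayley _ rfl] at hmn
      -- hence `C` is central
      have hC : ∃ l : ℤ, s 0 * s 1 * s 2 = z ^ l := by
        have f00 := congrFun (congrFun hmn 0) 0
        have f01 := congrFun (congrFun hmn 0) 1
        have f10 := congrFun (congrFun hmn 1) 0
        have f11 := congrFun (congrFun hmn 1) 1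
        generalize s 0 * s 1 * s 2 = g at f00 f01 f10 f11 ⊢
        simp only [Matrix.sub_apply, Matrix.smul_apply, smul_eq_mul, Matrix.one_apply_eq,
          Matrix.one_apply_ne (show (0 : Fin 2) ≠ 1 by decide),
          Matrix.one_apply_ne (show (1 : Fin 2) ≠ 0 by decide)] at f00 f01 f10 f11
        have ht : m g 0 0 + m g 1 1 ≠ 0 := by
          intro h0; rw [h0] at f00; simp at f00
        apply scalar
        · exact mul_left_cancel₀ ht (by linarith)
        · exact mul_left_cancel₀ ht (by linarith)
        · exact mul_left_cancel₀ ht (by linarith)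
      obtain ⟨l, hl⟩ := hC
      have ha : s 0 = z ^ l * (s 1 * s 2)⁻¹ := by rw [← hl]; group
      rcases hcases with h | ⟨j, hj⟩
      · have h' : Commute (s 1) (s 2) := h
        apply hred
        · rw [ha]
          exact ((zpow_comm l (s 1)).mul_left
            ((Commute.refl _).mul_left h'.symm).inv_left)
        · rw [ha]
          exact ((zpow_comm l (s 2)).mul_left
            (h'.mul_left (Commute.refl _)).inv_left)
      · have e1 := congrArg esum hj
        have e2 := congrArg esum hl
        rw [esum_zpow, esum_z, esum_mul, esum_mul] at e1
        rw [heC, esum_zpow, esum_z] at e2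
        omega
    · push Not at hz
      exact hred (comm_trans hz (hcomm 0) (hcomm 1)) (comm_trans hz (hcomm 0) (hcomm 2))
  · unfold SimpleVertex
    simp only [act_cj]
    constructor
    · rintro (h | h)
      · exact Or.inl (cj_inj _ h)
      · exact Or.inr (cj_inj _ h)
    · rintro (h | h)
      · left; rw [h]
      · right; rw [h]
end
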